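/- arXiv:2312.14128 — 2 statements merged into one kernel-verified Lean document; each statement's English description precedes it below -/
import Mathlib

section
/- Let λ ∈ ℂ with λ ≠ 0 and λ² ≠ 1, and let c₁, c₂, c₃ ∈ ℂ. An element K ∈ ℂ_λ[S²] satisfies the three equations ∑_{j=1}^{3} y^i y^j [y^j, K] + 2iλ ∑_{j,m=1}^{3} ε_{ijm} [y^j, K] y^m = c_i · 1 (for i = 1, 2, 3) if and only if K = K₀ · 1 + ∑_{i=1}^{3} (c_i / (4λ²(1−λ²))) y^i for some K₀ ∈ ℂ. Here [a,b] := ab − ba. -/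
noncomputable section

/-- The totally antisymmetric Levi-Civita symbol on three indices with ε₀₁₂ = 1
(indices written 1,2,3 in the paper). -/
def epsC (i j k : Fin 3) : ℂ :=
  ((((i : ℤ) - (j : ℤ)) * ((j : ℤ) - (k : ℤ)) * ((k : ℤ) - (i : ℤ))) / 2 : ℤ)

/-- The defining relations of the fuzzy sphere `ℂ_λ[S²]`:
`y^i y^j − y^j y^i = 2iλ ε_{ijk} y^k` and `∑ (y^i)² = (1 − λ²)·1`. -/
inductive FuzzyRel (lam : ℂ) : FreeAlgebra ℂ (Fin 3) → FreeAlgebra ℂ (Fin 3) → Prop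
  | comm (i j : Fin 3) :
      FuzzyRel lam
        (FreeAlgebra.ι ℂ i * FreeAlgebra.ι ℂ j - FreeAlgebra.ι ℂ j * FreeAlgebra.ι ℂ i)
        (∑ k, (2 * Complex.I * lam * epsC i j k) • FreeAlgebra.ι ℂ k)
  | sphere :
      FuzzyRel lam (∑ i, FreeAlgebra.ι ℂ i * FreeAlgebra.ι ℂ i)
        ((1 - lam ^ 2) • (1 : FreeAlgebra ℂ (Fin 3)))

/-- The fuzzy sphere `ℂ_λ[S²]`: the quotient of the free algebra on three generators by the
two-sided ideal generated by the defining relations. -/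
abbrev FuzzySphere (lam : ℂ) := RingQuot (FuzzyRel lam)

/-- The generators `y^i` of the fuzzy sphere. -/
def yGen (lam : ℂ) (i : Fin 3) : FuzzySphere lam :=
  RingQuot.mkAlgHom ℂ (FuzzyRel lam) (FreeAlgebra.ι ℂ i)

/-- An element whose commutators `D` with an `so(3)`-triple on a sphere satisfy
`y^i (y · D) + μ (D × y)_i = 0` commutes with the triple. -/
theorem commute_of_homogeneous {A : Type*} [Ring A] [Algebra ℂ A] {x y z K : A} {μ s : ℂ}
    (hμ : μ ≠ 0) (hs0 : s ≠ 0)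
    (hxy : x * y - y * x = μ • z) (hyz : y * z - z * y = μ • x) (hzx : z * x - x * z = μ • y)
    (hs : x * x + y * y + z * z = s • (1 : A))
    (hx : x * (x * (x * K - K * x) + y * (y * K - K * y) + z * (z * K - K * z))
      + μ • ((y * K - K * y) * z - (z * K - K * z) * y) = 0)
    (hy : y * (x * (x * K - K * x) + y * (y * K - K * y) + z * (z * K - K * z))
      + μ • ((z * K - K * z) * x - (x * K - K * x) * z) = 0)
    (hz : z * (x * (x * K - K * x) + y * (y * K - K * y) + z * (z * K - K * z))
      + μ • ((x * K - K * x) * y - (y * K - K * y) * x) = 0) :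
    Commute x K ∧ Commute y K ∧ Commute z K := by
  have hF : x * (x * K - K * x) + y * (y * K - K * y) + z * (z * K - K * z) = 0 := by
    suffices s • (x * (x * K - K * x) + y * (y * K - K * y) + z * (z * K - K * z)) = 0 from
      (smul_eq_zero.mp this).resolve_left hs0
    linear_combination (norm := skip) x * hx + y * hy + z * hz
      - hs * (x * (x * K - K * x) + y * (y * K - K * y) + z * (z * K - K * z))
      - μ • (hxy * (K * z) + hzx * (K * y) + hyz * (K * x)
        - x * K * hyz - y * K * hzx - z * K * hxy)
    simp only [mul_add, add_mul, mul_sub, sub_mul, mul_assoc, smul_mul_assoc, mul_smul_comm,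
      one_mul, mul_zero]
    module
  have cross {a b : A} (h : μ • (a - b) = 0) : a - b = 0 :=
    (smul_eq_zero.mp h).resolve_left hμ
  rw [hF, mul_zero, zero_add] at hx hy hz
  replace hx := cross hx
  replace hy := cross hy
  replace hz := cross hz
  have hG : (x * K - K * x) * x + (y * K - K * y) * y + (z * K - K * z) * z = 0 := by
    linear_combination (norm := skip) -hF + hs * K - K * hs
    simp only [mul_add, add_mul, mul_sub, sub_mul, mul_assoc, smul_mul_assoc, mul_smul_comm,
      one_mul, mul_one]
    module
  have key {a : A} (h : s • (a * K - K * a) = 0) : Commute a K :=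
    sub_eq_zero.mp ((smul_eq_zero.mp h).resolve_left hs0)
  refine ⟨key ?_, key ?_, key ?_⟩
  · linear_combination (norm := skip) -(x * K - K * x) * hs + hG * x + μ • hx
      + hz * y - hy * z + (y * K - K * y) * hxy - (z * K - K * z) * hzx
    simp only [mul_add, add_mul, mul_sub, sub_mul, mul_assoc, mul_smul_comm, mul_one,
      zero_mul, neg_mul]
    module
  · linear_combination (norm := skip) -(y * K - K * y) * hs + hG * y + μ • hy
      + hx * z - hz * x + (z * K - K * z) * hyz - (x * K - K * x) * hxy
    simp only [mul_add, add_mul, mul_sub, sub_mul, mul_assoc, mul_smul_comm, mul_one,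
      zero_mul, neg_mul]
    module
  · linear_combination (norm := skip) -(z * K - K * z) * hs + hG * z + μ • hz
      + hy * x - hx * y + (x * K - K * x) * hzx - (y * K - K * y) * hyz
    simp only [mul_add, add_mul, mul_sub, sub_mul, mul_assoc, mul_smul_comm, mul_one,
      zero_mul, neg_mul]
    module

/-- If `h` shifts past `g` by the scalar `a`, then it shifts past `g ^ n` by `n a`. -/
theorem mul_pow_of_weight {A : Type*} [Ring A] [Algebra ℂ A] {g h : A} {a : ℂ}
    (hg : h * g = g * h + a • g) (n : ℕ) :
    h * g ^ n = g ^ n * (h + algebraMap ℂ A (n * a)) := by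
  induction n with
  | zero => simp
  | succ n ih =>
    rw [pow_succ, ← mul_assoc, ih, mul_assoc, mul_assoc, add_mul, hg]
    congr 1
    simp only [Algebra.algebraMap_eq_smul_one, mul_add, smul_mul_assoc, mul_smul_comm, one_mul,
      mul_one]
    push_cast
    module

open Polynomial in
/-- If `h` shifts past `g` by a scalar, then `g ^ n ℂ[h]` is stable under left multiplication
by `ℂ[h]`. -/
theorem mul_pow_mul_aeval {A : Type*} [Ring A] [Algebra ℂ A] {g h : A} {a : ℂ}
    (hg : h * g = g * h + a • g) (n : ℕ) (q p : ℂ[X]) :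
    ∃ r : ℂ[X], aeval h q * (g ^ n * aeval h p) = g ^ n * aeval h r := by
  have hs : SemiconjBy (g ^ n) (h + algebraMap ℂ A (n * a)) h := (mul_pow_of_weight hg n).symm
  refine ⟨q.comp (X + C (n * a)) * p, ?_⟩
  have : SemiconjBy (g ^ n) (aeval (h + algebraMap ℂ A (n * a)) q) (aeval h q) := by
    induction q using Polynomial.induction_on' with
    | add p q hp hq => simpa using hp.add_right hq
    | monomial k c =>
      simp only [aeval_monomial]
      exact SemiconjBy.mul_right (Algebra.commutes c (g ^ n)).symm (hs.pow_right k)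
  rw [map_mul, aeval_comp, ← mul_assoc, ← mul_assoc]
  simp only [map_add, aeval_X, aeval_C]
  rw [this.eq]

open Polynomial in
/-- In an algebra generated by a weight triple `e, f, h` of generalized Weyl type, the centralizer
of `h` is `ℂ[h]`. -/
theorem exists_aeval_of_commute {A : Type*} [Ring A] [Algebra ℂ A] {e f h : A} {a : ℂ}
    (ha : a ≠ 0) (he : h * e = e * h + a • e) (hf : h * f = f * h + (-a) • f)
    {P Q : ℂ[X]} (hef : e * f = aeval h P) (hfe : f * e = aeval h Q)
    (htop : Algebra.adjoin ℂ {e, f, h} = ⊤) {K : A} (hK : Commute h K) :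
    ∃ p : ℂ[X], K = aeval h p := by
  let N : Submodule ℂ A := Submodule.span ℂ
    ({x | ∃ (n : ℕ) (p : ℂ[X]), x = e ^ n * aeval h p} ∪
      {x | ∃ (n : ℕ) (p : ℂ[X]), x = f ^ n * aeval h p})
  have memE (n : ℕ) (p : ℂ[X]) : e ^ n * aeval h p ∈ N :=
    Submodule.subset_span (Or.inl ⟨n, p, rfl⟩)
  have memF (n : ℕ) (p : ℂ[X]) : f ^ n * aeval h p ∈ N :=
    Submodule.subset_span (Or.inr ⟨n, p, rfl⟩)
  have stable {g : A} (hE : ∀ (n : ℕ) (p : ℂ[X]), g * (e ^ n * aeval h p) ∈ N)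
      (hF : ∀ (n : ℕ) (p : ℂ[X]), g * (f ^ n * aeval h p) ∈ N) : ∀ m ∈ N, g * m ∈ N := by
    intro m hm
    induction hm using Submodule.span_induction with
    | mem x hx => rcases hx with ⟨n, p, rfl⟩ | ⟨n, p, rfl⟩ <;> apply_assumption
    | zero => simp
    | add x y _ _ hx hy => rw [mul_add]; exact N.add_mem hx hy
    | smul c x _ hx => rw [mul_smul_comm]; exact N.smul_mem c hx
  have mul_mem (x : A) : ∀ m ∈ N, x * m ∈ N := by
    have hx : x ∈ Algebra.adjoin ℂ {e, f, h} := htop ▸ Algebra.mem_top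
    induction hx using Algebra.adjoin_induction with
    | mem x hx =>
      rcases hx with rfl | rfl | rfl
      · refine stable (fun n p => ?_) (fun n p => ?_)
        · rw [← mul_assoc, ← pow_succ']; exact memE _ _
        · cases n with
          | zero => simpa using memE 1 p
          | succ n =>
            obtain ⟨r, hr⟩ := mul_pow_mul_aeval hf n P p
            rw [pow_succ', mul_assoc, ← mul_assoc, hef, hr]; exact memF _ _
      · refine stable (fun n p => ?_) (fun n p => ?_)
        · cases n with
          | zero => simpa using memF 1 p
          | succ n =>
            obtain ⟨r, hr⟩ := mul_pow_mul_aeval he n Q p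
            rw [pow_succ', mul_assoc, ← mul_assoc, hfe, hr]; exact memE _ _
        · rw [← mul_assoc, ← pow_succ']; exact memF _ _
      · refine stable (fun n p => ?_) (fun n p => ?_)
        · obtain ⟨r, hr⟩ := mul_pow_mul_aeval he n X p
          rw [aeval_X] at hr
          rw [hr]; exact memE _ _
        · obtain ⟨r, hr⟩ := mul_pow_mul_aeval hf n X p
          rw [aeval_X] at hr
          rw [hr]; exact memF _ _
    | algebraMap c =>
      intro m hm
      rw [← Algebra.smul_def]; exact N.smul_mem c hm
    | add x y _ _ hx hy =>
      intro m hm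
      rw [add_mul]; exact N.add_mem (hx m hm) (hy m hm)
    | mul x y _ _ hx hy =>
      intro m hm
      rw [mul_assoc]; exact hx _ (hy m hm)
  let T : Module.End ℂ A := LinearMap.mulLeft ℂ h - LinearMap.mulRight ℂ h
  have weight {g : A} {b : ℂ} (hg : h * g = g * h + b • g) (n : ℕ) (p : ℂ[X]) :
      g ^ n * aeval h p ∈ T.eigenspace (n * b) := by
    have hc : h * aeval h p = aeval h p * h := by
      simpa using congrArg (aeval h) (mul_comm X p)
    rw [Module.End.mem_eigenspace_iff]
    simp only [T, LinearMap.sub_apply, LinearMap.mulLeft_apply, LinearMap.mulRight_apply]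
    rw [← mul_assoc, mul_pow_of_weight hg n, mul_assoc, mul_assoc, add_mul, hc,
      ← Algebra.smul_def, mul_add, mul_smul_comm, add_sub_cancel_left]
  have hN : N ≤ Subalgebra.toSubmodule (aeval h : ℂ[X] →ₐ[ℂ] A).range ⊔
      ⨆ b : ℂ, ⨆ _ : b ≠ 0, T.eigenspace b := by
    have aux {g : A} {b : ℂ} (hb : b ≠ 0) (hg : h * g = g * h + b • g) (n : ℕ) (p : ℂ[X]) :
        g ^ n * aeval h p ∈ Subalgebra.toSubmodule (aeval h : ℂ[X] →ₐ[ℂ] A).range ⊔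
          ⨆ b : ℂ, ⨆ _ : b ≠ 0, T.eigenspace b := by
      rcases Nat.eq_zero_or_pos n with rfl | hn
      · exact Submodule.mem_sup_left ⟨p, by simp⟩
      · refine Submodule.mem_sup_right ?_
        have hnb : (n : ℂ) * b ≠ 0 := mul_ne_zero (by exact_mod_cast hn.ne') hb
        exact Submodule.mem_iSup_of_mem _ (Submodule.mem_iSup_of_mem hnb (weight hg n p))
    refine Submodule.span_le.mpr ?_
    rintro x (⟨n, p, rfl⟩ | ⟨n, p, rfl⟩)
    · exact aux ha he n p
    · exact aux (neg_ne_zero.mpr ha) hf n p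
  have hKN : K ∈ N := by
    have h1 : (1 : A) ∈ N := by simpa using memE 0 1
    simpa using mul_mem K 1 h1
  obtain ⟨m, ⟨p, rfl⟩, w, hw, rfl⟩ := Submodule.mem_sup.mp (hN hKN)
  refine ⟨p, ?_⟩
  have hp : aeval h p ∈ T.eigenspace 0 := by simpa using weight he 0 p
  have hK0 : aeval h p + w ∈ T.eigenspace 0 := by
    rw [Module.End.mem_eigenspace_iff]
    simp only [T, LinearMap.sub_apply, LinearMap.mulLeft_apply, LinearMap.mulRight_apply]
    rw [zero_smul, sub_eq_zero]; exact hK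
  have hw0 : w ∈ T.eigenspace 0 := by
    simpa using (T.eigenspace 0).sub_mem hK0 hp
  have : w = 0 :=
    Submodule.disjoint_def.mp (T.eigenspaces_iSupIndep 0) w hw0 hw
  simp [this]

theorem yGen_comm (lam : ℂ) :
    yGen lam 0 * yGen lam 1 - yGen lam 1 * yGen lam 0 = (2 * Complex.I * lam) • yGen lam 2 ∧
    yGen lam 1 * yGen lam 2 - yGen lam 2 * yGen lam 1 = (2 * Complex.I * lam) • yGen lam 0 ∧
    yGen lam 2 * yGen lam 0 - yGen lam 0 * yGen lam 2 = (2 * Complex.I * lam) • yGen lam 1 := by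
  refine ⟨?_, ?_, ?_⟩
  · simpa [Fin.sum_univ_three, epsC, yGen] using
      RingQuot.mkAlgHom_rel ℂ (FuzzyRel.comm (lam := lam) 0 1)
  · simpa [Fin.sum_univ_three, epsC, yGen] using
      RingQuot.mkAlgHom_rel ℂ (FuzzyRel.comm (lam := lam) 1 2)
  · simpa [Fin.sum_univ_three, epsC, yGen] using
      RingQuot.mkAlgHom_rel ℂ (FuzzyRel.comm (lam := lam) 2 0)

theorem yGen_sphere (lam : ℂ) :
    yGen lam 0 * yGen lam 0 + yGen lam 1 * yGen lam 1 + yGen lam 2 * yGen lam 2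
      = (1 - lam ^ 2) • (1 : FuzzySphere lam) := by
  simpa only [Fin.sum_univ_three, map_add, map_mul, map_smul, map_one, yGen] using
    RingQuot.mkAlgHom_rel ℂ (FuzzyRel.sphere (lam := lam))

theorem adjoin_yGen (lam : ℂ) : Algebra.adjoin ℂ (Set.range (yGen lam)) = ⊤ := by
  have h := congrArg (Subalgebra.map (RingQuot.mkAlgHom ℂ (FuzzyRel lam)))
    (FreeAlgebra.adjoin_range_ι ℂ (Fin 3))
  rw [AlgHom.map_adjoin, ← Set.range_comp, Algebra.map_top,
    (AlgHom.range_eq_top _).mpr (RingQuot.mkAlgHom_surjective ℂ _)] at h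
  exact h

/-- The value `(e f)(n)` in the weight representation on functions `ℤ → ℂ`. -/
def weightCoeff (lam : ℂ) (n : ℤ) : ℂ :=
  1 - lam ^ 2 - (2 * lam * n) ^ 2 + 2 * lam * (2 * lam * n)

/-- The raising operator `φ ↦ (n ↦ φ (n - 1))`. -/
def raiseOp : Module.End ℂ (ℤ → ℂ) where
  toFun φ n := φ (n - 1)
  map_add' _ _ := rfl
  map_smul' _ _ := rfl

/-- The lowering operator of the weight representation. -/
def lowerOp (lam : ℂ) : Module.End ℂ (ℤ → ℂ) where
  toFun φ n := weightCoeff lam (n + 1) * φ (n + 1)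
  map_add' _ _ := by ext; simp [mul_add]
  map_smul' _ _ := by ext; simp [mul_left_comm]

/-- The diagonal operator of the weight representation. -/
def weightOp (lam : ℂ) : Module.End ℂ (ℤ → ℂ) where
  toFun φ n := (2 * lam * n) * φ n
  map_add' _ _ := by ext; simp [mul_add]
  map_smul' _ _ := by ext; simp [mul_left_comm]

/-- The images of the generators in the weight representation. -/
def weightGen (lam : ℂ) : Fin 3 → Module.End ℂ (ℤ → ℂ) :=
  ![(1 / 2 : ℂ) • (raiseOp + lowerOp lam), (-Complex.I / 2) • (raiseOp - lowerOp lam),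
    weightOp lam]

theorem weightGen_rel (lam : ℂ) ⦃a b : FreeAlgebra ℂ (Fin 3)⦄ (h : FuzzyRel lam a b) :
    FreeAlgebra.lift ℂ (weightGen lam) a = FreeAlgebra.lift ℂ (weightGen lam) b := by
  have hI := Complex.I_sq
  cases h with
  | comm i j =>
    ext φ n
    fin_cases i <;> fin_cases j <;>
    · simp [Fin.sum_univ_three, epsC, weightGen, raiseOp, lowerOp, weightOp, weightCoeff]
      try grind
  | sphere =>
    ext φ n
    simp [Fin.sum_univ_three, weightGen, raiseOp, lowerOp, weightOp, weightCoeff]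
    grind

/-- The weight representation of the fuzzy sphere. -/
def weightRep (lam : ℂ) : FuzzySphere lam →ₐ[ℂ] Module.End ℂ (ℤ → ℂ) :=
  RingQuot.liftAlgHom ℂ ⟨FreeAlgebra.lift ℂ (weightGen lam), weightGen_rel lam⟩

theorem weightRep_yGen (lam : ℂ) (i : Fin 3) : weightRep lam (yGen lam i) = weightGen lam i := by
  simp [weightRep, yGen]

open Polynomial in
theorem aeval_weightOp_apply (lam : ℂ) (p : ℂ[X]) (φ : ℤ → ℂ) (n : ℤ) :
    aeval (weightOp lam) p φ n = p.eval (2 * lam * n) * φ n := by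
  induction p using Polynomial.induction_on' with
  | add p q hp hq => simp [hp, hq, add_mul]
  | monomial k c =>
    have (k : ℕ) : ((weightOp lam) ^ k) φ n = (2 * lam * n) ^ k * φ n := by
      induction k with
      | zero => simp
      | succ k ih =>
        rw [pow_succ', Module.End.mul_apply]
        change (2 * lam * n) * ((weightOp lam) ^ k) φ n = _
        rw [ih]; ring
    simp [aeval_monomial, this, mul_assoc]

open Polynomial in
/-- The centre of the fuzzy sphere consists of scalars when `λ ≠ 0`. -/
theorem exists_smul_one_of_commute {lam : ℂ} (hlam : lam ≠ 0) {K : FuzzySphere lam}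
    (h0 : Commute (yGen lam 0) K) (h1 : Commute (yGen lam 1) K) (h2 : Commute (yGen lam 2) K) :
    ∃ k : ℂ, K = k • (1 : FuzzySphere lam) := by
  obtain ⟨hxy, hyz, hzx⟩ := yGen_comm lam
  have hs := yGen_sphere lam
  have hgen := adjoin_yGen lam
  have hI := Complex.I_mul_I
  have hK : ∃ p : ℂ[X], K = aeval (yGen lam 2) p := by
    refine exists_aeval_of_commute (a := 2 * lam) (e := yGen lam 0 + Complex.I • yGen lam 1)
      (f := yGen lam 0 - Complex.I • yGen lam 1)
      (P := C (1 - lam ^ 2) - X * X + C (2 * lam) * X)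
      (Q := C (1 - lam ^ 2) - X * X - C (2 * lam) * X)
      (mul_ne_zero two_ne_zero hlam) ?_ ?_ ?_ ?_ ?_ h2
    · linear_combination (norm := skip) hzx - Complex.I • hyz
      simp only [mul_add, add_mul, smul_mul_assoc, mul_smul_comm]
      match_scalars <;> grind
    · linear_combination (norm := skip) hzx + Complex.I • hyz
      simp only [mul_sub, sub_mul, smul_mul_assoc, mul_smul_comm]
      match_scalars <;> grind
    · simp only [map_add, map_sub, map_mul, aeval_X, aeval_C, Algebra.algebraMap_eq_smul_one]
      linear_combination (norm := skip) hs - Complex.I • hxy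
      simp only [add_mul, mul_sub, smul_mul_assoc, mul_smul_comm, one_mul]
      match_scalars <;> grind
    · simp only [map_sub, map_mul, aeval_X, aeval_C, Algebra.algebraMap_eq_smul_one]
      linear_combination (norm := skip) hs + Complex.I • hxy
      simp only [mul_add, sub_mul, smul_mul_assoc, mul_smul_comm, one_mul]
      match_scalars <;> grind
    · rw [eq_top_iff, ← hgen, Algebra.adjoin_le_iff]
      set S := Algebra.adjoin ℂ ({yGen lam 0 + Complex.I • yGen lam 1,
        yGen lam 0 - Complex.I • yGen lam 1, yGen lam 2} : Set (FuzzySphere lam))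
      have he : yGen lam 0 + Complex.I • yGen lam 1 ∈ S := Algebra.subset_adjoin (by simp)
      have hf : yGen lam 0 - Complex.I • yGen lam 1 ∈ S := Algebra.subset_adjoin (by simp)
      have hh : yGen lam 2 ∈ S := Algebra.subset_adjoin (by simp)
      rintro _ ⟨i, rfl⟩
      fin_cases i
      · have : yGen lam 0 = (1 / 2 : ℂ) • ((yGen lam 0 + Complex.I • yGen lam 1)
            + (yGen lam 0 - Complex.I • yGen lam 1)) := by module
        change yGen lam 0 ∈ S
        rw [this]; exact S.smul_mem (S.add_mem he hf) _
      · have : yGen lam 1 = (-Complex.I / 2 : ℂ) • ((yGen lam 0 + Complex.I • yGen lam 1)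
            - (yGen lam 0 - Complex.I • yGen lam 1)) := by
          match_scalars <;> grind
        change yGen lam 1 ∈ S
        rw [this]; exact S.smul_mem (S.sub_mem he hf) _
      · exact hh
  obtain ⟨p, rfl⟩ := hK
  have hraise : weightRep lam (yGen lam 0 + Complex.I • yGen lam 1) = raiseOp := by
    rw [map_add, map_smul, weightRep_yGen, weightRep_yGen]
    simp only [weightGen, Matrix.cons_val_zero, Matrix.cons_val_one]
    match_scalars <;> grind
  have hweight : weightRep lam (aeval (yGen lam 2) p) = aeval (weightOp lam) p := by
    rw [← Polynomial.aeval_algHom_apply, weightRep_yGen]; rfl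
  have hcomm := ((h0.add_left (h1.smul_left Complex.I)).map (weightRep lam)).eq
  rw [hraise, hweight] at hcomm
  have hstep (n : ℤ) : p.eval (2 * lam * ((n - 1 : ℤ) : ℂ)) = p.eval (2 * lam * n) := by
    have := congrFun (LinearMap.congr_fun hcomm (fun _ => 1)) n
    rw [Module.End.mul_apply, Module.End.mul_apply, aeval_weightOp_apply] at this
    change aeval (weightOp lam) p _ (n - 1) = _ at this
    rw [aeval_weightOp_apply] at this
    simpa [raiseOp] using this
  have heval (n : ℕ) : p.eval (2 * lam * n) = p.eval 0 := by
    induction n with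
    | zero => simp
    | succ n ih => rw [← ih]; simpa using (hstep (n + 1)).symm
  have hp : p = C (p.eval 0) := by
    refine Polynomial.eq_of_infinite_eval_eq _ _
      ((Set.infinite_range_of_injective (f := fun n : ℕ => 2 * lam * (n : ℂ)) ?_).mono ?_)
    · intro m n hmn
      exact_mod_cast mul_left_cancel₀ (mul_ne_zero two_ne_zero hlam) hmn
    · rintro _ ⟨n, rfl⟩
      simpa using heval n
  refine ⟨p.eval 0, ?_⟩
  conv_lhs => rw [hp]
  rw [aeval_C, Algebra.algebraMap_eq_smul_one]

/-- The left-hand side of the equations, as a linear map in `K`. -/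
def fuzzyOp (lam : ℂ) (i : Fin 3) : FuzzySphere lam →ₗ[ℂ] FuzzySphere lam where
  toFun K := ∑ j, yGen lam i * (yGen lam j * (yGen lam j * K - K * yGen lam j))
    + (2 * Complex.I * lam) •
      ∑ j, ∑ m, epsC i j m • ((yGen lam j * K - K * yGen lam j) * yGen lam m)
  map_add' K L := by
    simp only [Fin.sum_univ_three, mul_add, add_mul, mul_sub, sub_mul]
    module
  map_smul' k K := by
    simp only [Fin.sum_univ_three, mul_sub, sub_mul, mul_smul_comm, smul_mul_assoc,
      RingHom.id_apply]
    module

theorem fuzzyOp_apply (lam : ℂ) (K : FuzzySphere lam) :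
    let x := yGen lam 0
    let y := yGen lam 1
    let z := yGen lam 2
    let F := x * (x * K - K * x) + y * (y * K - K * y) + z * (z * K - K * z)
    fuzzyOp lam 0 K = x * F
      + (2 * Complex.I * lam) • ((y * K - K * y) * z - (z * K - K * z) * y) ∧
    fuzzyOp lam 1 K = y * F
      + (2 * Complex.I * lam) • ((z * K - K * z) * x - (x * K - K * x) * z) ∧
    fuzzyOp lam 2 K = z * F
      + (2 * Complex.I * lam) • ((x * K - K * x) * y - (y * K - K * y) * x) := by
  refine ⟨?_, ?_, ?_⟩ <;>
  · norm_num [fuzzyOp, Fin.sum_univ_three, epsC, mul_add]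
    module

theorem fuzzyOp_one (lam : ℂ) (i : Fin 3) : fuzzyOp lam i 1 = 0 := by
  simp [fuzzyOp]

/-- The coordinates of the `so(3)`-triple solve the equations with right-hand side
`-μ² s` times the identity matrix. -/
theorem operator_apply_triple {A : Type*} [Ring A] [Algebra ℂ A] {x y z : A} {μ s : ℂ}
    (hxy : x * y - y * x = μ • z) (hyz : y * z - z * y = μ • x) (hzx : z * x - x * z = μ • y)
    (hs : x * x + y * y + z * z = s • (1 : A)) :
    x * (x * (x * x - x * x) + y * (y * x - x * y) + z * (z * x - x * z))
      + μ • ((y * x - x * y) * z - (z * x - x * z) * y) = (-μ ^ 2 * s) • (1 : A) ∧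
    y * (x * (x * x - x * x) + y * (y * x - x * y) + z * (z * x - x * z))
      + μ • ((z * x - x * z) * x - (x * x - x * x) * z) = 0 ∧
    z * (x * (x * x - x * x) + y * (y * x - x * y) + z * (z * x - x * z))
      + μ • ((x * x - x * x) * y - (y * x - x * y) * x) = 0 := by
  have hyx : y * x - x * y = -(μ • z) := by rw [← hxy, neg_sub]
  have hF : x * (x * x - x * x) + y * (y * x - x * y) + z * (z * x - x * z) = -(μ ^ 2) • x := by
    rw [hyx, hzx, sub_self]
    linear_combination (norm := skip) -μ • hyz
    simp only [mul_neg, mul_smul_comm, mul_zero]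
    module
  rw [hF, hyx, hzx, sub_self]
  refine ⟨?_, ?_, ?_⟩
  · linear_combination (norm := skip) -μ ^ 2 • hs
    simp only [neg_mul, mul_smul_comm, smul_mul_assoc]
    module
  · simp only [zero_mul, mul_smul_comm, smul_mul_assoc]
    module
  · simp only [zero_mul, neg_mul, mul_smul_comm, smul_mul_assoc]
    module

theorem fuzzyOp_yGen (lam : ℂ) (i j : Fin 3) :
    fuzzyOp lam i (yGen lam j) =
      if i = j then (4 * lam ^ 2 * (1 - lam ^ 2)) • (1 : FuzzySphere lam) else 0 := by
  obtain ⟨hxy, hyz, hzx⟩ := yGen_comm lam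
  have hs := yGen_sphere lam
  have hc : -(2 * Complex.I * lam) ^ 2 * (1 - lam ^ 2) = 4 * lam ^ 2 * (1 - lam ^ 2) := by
    linear_combination (-4 * lam ^ 2 * (1 - lam ^ 2)) * Complex.I_sq
  have hx := operator_apply_triple hxy hyz hzx hs
  have hy := operator_apply_triple hyz hzx hxy (by rw [← hs]; abel)
  have hz := operator_apply_triple hzx hxy hyz (by rw [← hs]; abel)
  rw [hc] at hx hy hz
  obtain ⟨e0, e1, e2⟩ := fuzzyOp_apply lam (yGen lam j)
  fin_cases j
  · fin_cases i
    · exact e0.trans hx.1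
    · exact e1.trans hx.2.1
    · exact e2.trans hx.2.2
  · rw [add_rotate] at e0 e1 e2
    fin_cases i
    · exact e0.trans hy.2.2
    · exact e1.trans hy.1
    · exact e2.trans hy.2.1
  · rw [← add_rotate] at e0 e1 e2
    fin_cases i
    · exact e0.trans hz.2.1
    · exact e1.trans hz.2.2
    · exact e2.trans hz.1

/-- For `λ ≠ 0`, `λ² ≠ 1` and `c₁, c₂, c₃ ∈ ℂ`, an element `K ∈ ℂ_λ[S²]` satisfies
`∑_j y^i y^j [y^j, K] + 2iλ ∑_{j,m} ε_{ijm} [y^j, K] y^m = c_i · 1` for `i = 1,2,3`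
iff `K = K₀·1 + ∑_i (c_i / (4λ²(1−λ²))) y^i` for some `K₀ ∈ ℂ`. -/
theorem stmt5 (lam : ℂ) (hlam : lam ≠ 0) (hlam2 : lam ^ 2 ≠ 1)
    (c : Fin 3 → ℂ) (K : FuzzySphere lam) :
    (∀ i, ∑ j, yGen lam i * (yGen lam j * (yGen lam j * K - K * yGen lam j))
        + (2 * Complex.I * lam) •
            ∑ j, ∑ m, epsC i j m • ((yGen lam j * K - K * yGen lam j) * yGen lam m)
      = c i • (1 : FuzzySphere lam))
    ↔ ∃ K₀ : ℂ, K = K₀ • (1 : FuzzySphere lam)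
        + ∑ i, (c i / (4 * lam ^ 2 * (1 - lam ^ 2))) • yGen lam i := by
  have hs : 1 - lam ^ 2 ≠ 0 := sub_ne_zero.mpr hlam2.symm
  have hd : 4 * lam ^ 2 * (1 - lam ^ 2) ≠ 0 := by simp [hlam, hs]
  change (∀ i, fuzzyOp lam i K = c i • (1 : FuzzySphere lam)) ↔ _
  have hlin (i : Fin 3) :
      fuzzyOp lam i (∑ j, (c j / (4 * lam ^ 2 * (1 - lam ^ 2))) • yGen lam j)
        = c i • (1 : FuzzySphere lam) := by
    simp only [map_sum, map_smul, fuzzyOp_yGen, smul_ite, smul_zero, Finset.sum_ite_eq,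
      Finset.mem_univ, if_true]
    rw [smul_smul, div_mul_cancel₀ _ hd]
  constructor
  · intro h
    set L := ∑ j, (c j / (4 * lam ^ 2 * (1 - lam ^ 2))) • yGen lam j
    have hom (i : Fin 3) : fuzzyOp lam i (K - L) = 0 := by rw [map_sub, h, hlin, sub_self]
    obtain ⟨e0, e1, e2⟩ := fuzzyOp_apply lam (K - L)
    rw [hom] at e0 e1 e2
    obtain ⟨hxy, hyz, hzx⟩ := yGen_comm lam
    obtain ⟨h0, h1, h2⟩ := commute_of_homogeneous (by simp [hlam]) hs hxy hyz hzx
      (yGen_sphere lam) e0.symm e1.symm e2.symm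
    obtain ⟨k, hk⟩ := exists_smul_one_of_commute hlam h0 h1 h2
    exact ⟨k, sub_eq_iff_eq_add.mp hk⟩
  · rintro ⟨k, rfl⟩ i
    rw [map_add, hlin, map_smul, fuzzyOp_one, smul_zero, zero_add]
end
end

section
/- Let U ⊆ ℝⁿ be open. Let g_{μν}, h_{ij}, A_{iμ} : U → ℝ be smooth with g, h symmetric and pointwise invertible (inverses g^{μν}, h^{ij}), and suppose g̃_{μν} := g_{μν} − h^{ij} A_{iμ} A_{jν} is pointwise invertible with smooth inverse g̃^{μν}. Set h̃^{ij} := h^{ij} + h^{ik} h^{lj} g̃^{μν} A_{kν} A_{lμ}, Ã^{αi} := −g̃^{αν} h^{ij} A_{jν}, and let Γ̃^σ_{μν} := (1/2) g̃^{σρ}(∂_μ g̃_{νρ} + ∂_ν g̃_{μρ} − ∂_ρ g̃_{μν}). Define the quantum Levi-Civita coefficients: E^k_{αβ} = −(1/2) h^{ki}(∂_α A_{iβ} + ∂_β A_{iα} − 2 A_{iμ} Γ^μ_{αβ}); F^μ_{αi} = (1/2) g̃^{βμ}( −(∂_α A_{iβ} − ∂_β A_{iα}) + h^{jk} A_{kβ}(∂_α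 h_{ij} − A_{lα} ε_{ijl}) ); B^k_{αi} = (1/2) h̃^{jk}( g^{μβ} A_{jμ}(∂_α A_{iβ} − ∂_β A_{iα}) + A_{lα} ε_{ijl} − ∂_α h_{ij} ); D^μ_{ij} = (1/2) g̃^{μα}( ∂_α h_{ij} − A_{kα} h^{mk}(h_{ni} ε_{jmn} + h_{nj} ε_{imn}) ); H^l_{ik} = (1/2) h̃^{jl}( h_{ni} ε_{kjn} + h_{nk} ε_{ijn} − A_{jμ} g^{μα} ∂_α h_{ik} ) − (1/2) ε_{lik}; Γ^σ_{μν} = Γ̃^σ_{μν} + (1/2) g̃^{σρ}( A_{μi}(∂_ν(h^{ij} A_{ρj}) − ∂_ρ(h^{ij} A_{νj})) + A_{νi}(∂_μ(h^{ij} A_{ρj}) − ∂_ρ(h^{ij} A_{μj})) + A_{iμ} A_{jν} ∂_ρ h^{ij} ). Let V be a complex vector space, P₁, P₂, P₃ ∈ End(V), and f : U → V smooth. Then: g̃^{αβ} ∂_α ∂_β f + h̃^{ij} P_i P_j f + 2 Ã^{αi} ∂_α (P_i f) + ( E^i_{αβ} g̃^{αβ} + 2 B^i_{αj} Ã^{αj}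 + H^i_{jk} h̃^{jk} ) P_i f + ( −Γ^μ_{αβ} g̃^{αβ} + 2 F^μ_{αj} Ã^{αj} + D^μ_{jk} h̃^{jk} ) ∂_μ f = g̃^{αβ} ( (∂_α − h^{ik} A_{kα} P_i)(∂_β − h^{jl} A_{lβ} P_j) f − Γ̃^μ_{αβ} (∂_μ − h^{ik} A_{kμ} P_i) f ) + h^{ij} P_i P_j f + (1/2) g̃^{αβ} ( h^{ij} ∂_α h_{ij} ) ( ∂_β f − h^{kl} A_{lβ} P_k f ). -/
noncomputable section

/-- The totally antisymmetric Levi-Civita symbol on three indices with ε₀₁₂ = 1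
(indices written 1,2,3 in the paper). -/
def eps (i j k : Fin 3) : ℝ :=
  ((((i : ℤ) - (j : ℤ)) * ((j : ℤ) - (k : ℤ)) * ((k : ℤ) - (i : ℤ))) / 2 : ℤ)

/-- The partial derivative `∂_μ f` of a function on `ℝⁿ`. -/
def pd {n : ℕ} {W : Type*} [NormedAddCommGroup W] [NormedSpace ℝ W]
    (μ : Fin n) (f : (Fin n → ℝ) → W) : (Fin n → ℝ) → W :=
  fun x => fderiv ℝ f x (Pi.single μ 1)

lemma eps_swap (i j k : Fin 3) : eps i j k = -eps j i k := by
  fin_cases i <;> fin_cases j <;> fin_cases k <;> norm_num [eps]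

lemma eps_cycle (i j k : Fin 3) : eps i j k = eps j k i := by
  fin_cases i <;> fin_cases j <;> fin_cases k <;> norm_num [eps]

section Pointwise

variable {n : ℕ} {G g ginv : Fin n → Fin n → ℝ} {h hi ht N : Fin 3 → Fin 3 → ℝ}
  {A q : Fin 3 → Fin n → ℝ} {m : Fin n → Fin 3 → ℝ}
  {dh : Fin n → Fin 3 → Fin 3 → ℝ} {a : Fin 3 → Fin n → Fin n → ℝ}

lemma sum_inverse_metric_mul_contract (hG : ∀ μ ν, G μ ν = G ν μ)
    (hm : ∀ α i, m α i = ∑ β, G α β * q i β) (K : Fin 3 → Fin n → ℝ) :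
    ∑ μ, ∑ ν, G μ ν * ∑ j, q j μ * K j ν = ∑ ν, ∑ j, m ν j * K j ν := by
  rw [Finset.sum_comm]
  refine Finset.sum_congr rfl fun ν _ => ?_
  simp only [hm, Finset.mul_sum, Finset.sum_mul]
  rw [Finset.sum_comm]
  refine Finset.sum_congr rfl fun j _ => Finset.sum_congr rfl fun μ _ => ?_
  rw [hG μ ν]; ring

lemma contract_symm (hG : ∀ μ ν, G μ ν = G ν μ)
    (hm : ∀ α i, m α i = ∑ β, G α β * q i β)
    (hN : ∀ i j, N i j = ∑ α, m α i * q j α) (i j : Fin 3) : N i j = N j i := by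
  simp only [hN, hm, Finset.sum_mul]
  rw [Finset.sum_comm]
  refine Finset.sum_congr rfl fun j _ => Finset.sum_congr rfl fun μ _ => ?_
  rw [hG μ j]; ring

/-- Contraction of the difference of the two Christoffel symbols with the inverse metric. -/
lemma contract_christoffel_difference (hG : ∀ μ ν, G μ ν = G ν μ)
    (hm : ∀ α i, m α i = ∑ β, G α β * q i β)
    (hN : ∀ i j, N i j = ∑ α, m α i * q j α)
    {T : Fin n → Fin n → Fin n → ℝ}
    (hT : ∀ μ ν ρ, T μ ν ρ =
      (∑ j, q j μ * (a j ν ρ - (∑ k, dh ν j k * q k ρ) + ∑ k, dh ρ j k * q k ν))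
      + (∑ j, q j ν * (a j μ ρ - (∑ k, dh μ j k * q k ρ) + ∑ k, dh ρ j k * q k μ))
      - ∑ i, ∑ j, q i μ * q j ν * dh ρ i j) (ρ : Fin n) :
    (1/2) * ∑ μ, ∑ ν, G μ ν * T μ ν ρ =
      (∑ ν, ∑ j, m ν j * a j ν ρ) - (∑ ν, ∑ j, ∑ k, m ν j * dh ν j k * q k ρ)
      + (1/2) * ∑ j, ∑ k, N j k * dh ρ j k := by
  set K : Fin 3 → Fin n → ℝ :=
    fun j ν => a j ν ρ - (∑ k, dh ν j k * q k ρ) + ∑ k, dh ρ j k * q k ν with hK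
  have e1 := sum_inverse_metric_mul_contract hG hm K
  have e2 : ∑ μ, ∑ ν, G μ ν * ∑ j, q j ν * K j μ = ∑ ν, ∑ j, m ν j * K j ν := by
    rw [← e1, Finset.sum_comm]
    exact Finset.sum_congr rfl fun j _ => Finset.sum_congr rfl fun μ _ => by rw [hG]
  have e3 := sum_inverse_metric_mul_contract hG hm (fun j ν => ∑ k, dh ρ j k * q k ν)
  have e4 : ∑ ν, ∑ j, m ν j * ∑ k, dh ρ j k * q k ν = ∑ j, ∑ k, N j k * dh ρ j k := by
    rw [Finset.sum_comm]
    refine Finset.sum_congr rfl fun j _ => ?_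
    simp only [hN, Finset.mul_sum, Finset.sum_mul]
    rw [Finset.sum_comm]
    refine Finset.sum_congr rfl fun j _ => Finset.sum_congr rfl fun μ _ => ?_
    ring
  have e5 : ∀ μ ν, ∑ i, ∑ j, q i μ * q j ν * dh ρ i j = ∑ j, q j μ * ∑ k, dh ρ j k * q k ν := by
    intro μ ν
    refine Finset.sum_congr rfl fun j _ => ?_
    rw [Finset.mul_sum]
    exact Finset.sum_congr rfl fun k _ => by ring
  have e6 : ∑ ν, ∑ j, m ν j * K j ν = (∑ ν, ∑ j, m ν j * a j ν ρ)
      - (∑ ν, ∑ j, ∑ k, m ν j * dh ν j k * q k ρ) + ∑ j, ∑ k, N j k * dh ρ j k := by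
    rw [← e4, ← Finset.sum_sub_distrib, ← Finset.sum_add_distrib]
    refine Finset.sum_congr rfl fun ν _ => ?_
    rw [← Finset.sum_sub_distrib, ← Finset.sum_add_distrib]
    refine Finset.sum_congr rfl fun j _ => ?_
    simp only [hK, mul_add, mul_sub, Finset.mul_sum, mul_assoc]
  have e7 : ∑ μ, ∑ ν, G μ ν * T μ ν ρ = (∑ μ, ∑ ν, G μ ν * ∑ j, q j μ * K j ν)
      + (∑ μ, ∑ ν, G μ ν * ∑ j, q j ν * K j μ)
      - ∑ μ, ∑ ν, G μ ν * ∑ j, q j μ * ∑ k, dh ρ j k * q k ν := by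
    rw [← Finset.sum_add_distrib, ← Finset.sum_sub_distrib]
    refine Finset.sum_congr rfl fun μ _ => ?_
    rw [← Finset.sum_add_distrib, ← Finset.sum_sub_distrib]
    refine Finset.sum_congr rfl fun ν _ => ?_
    rw [hT, e5]; ring
  rw [e7, e1, e2, e3, e4, e6]; ring

/-- The effective inverse metrics absorb the inverse spacetime metric. -/
lemma sum_ht_mul_A_mul_ginv
    {gt : Fin n → Fin n → ℝ}
    (hg : ∀ μ ν, ∑ ρ, g μ ρ * ginv ρ ν = if μ = ν then 1 else 0)
    (hGt : ∀ μ ν, ∑ ρ, G μ ρ * gt ρ ν = if μ = ν then 1 else 0)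
    (hgt : ∀ μ ν, g μ ν = gt μ ν + ∑ i, A i μ * q i ν)
    (hG : ∀ μ ν, G μ ν = G ν μ) (hh : ∀ i j, h i j = h j i)
    (hA : ∀ i μ, A i μ = ∑ j, h i j * q j μ)
    (hhi : ∀ i j, ∑ k, hi i k * h k j = if i = j then 1 else 0)
    (hm : ∀ α i, m α i = ∑ β, G α β * q i β)
    (hN : ∀ i j, N i j = ∑ α, m α i * q j α)
    (hht : ∀ i j, ht i j = hi i j + N i j) (k : Fin 3) (β : Fin n) :
    ∑ j, ht k j * ∑ μ, A j μ * ginv μ β = m β k := by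
  have hq : ∀ ν, ∑ j, hi k j * A j ν = q k ν := by
    intro ν
    simp only [hA, Finset.mul_sum]
    rw [Finset.sum_comm]
    simp only [← mul_assoc, ← Finset.sum_mul, hhi]
    simp
  have hmgt : ∀ ν, ∑ μ, m μ k * gt μ ν = q k ν := by
    intro ν
    simp only [hm, Finset.sum_mul]
    rw [Finset.sum_comm]
    have : ∀ y, ∑ x, G x y * q k y * gt x ν = q k y * ∑ x, G y x * gt x ν := by
      intro y
      rw [Finset.mul_sum]
      exact Finset.sum_congr rfl fun x _ => by rw [hG x y]; ring
    simp only [this, hGt]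
    simp
  have hNA : ∀ ν, ∑ j, N k j * A j ν = ∑ μ, m μ k * ∑ i, A i μ * q i ν := by
    intro ν
    have : ∀ μ, ∑ i, A i μ * q i ν = ∑ i, q i μ * A i ν := by
      intro μ
      simp only [hA, Finset.mul_sum, Finset.sum_mul]
      rw [Finset.sum_comm]
      refine Finset.sum_congr rfl fun j _ => Finset.sum_congr rfl fun i _ => ?_
      rw [hh i j]; ring
    simp only [this, hN, Finset.mul_sum, Finset.sum_mul]
    rw [Finset.sum_comm]
    simp only [mul_assoc]
  have key : ∀ ν, ∑ j, ht k j * A j ν = ∑ μ, m μ k * g μ ν := by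
    intro ν
    simp only [hht, hgt, add_mul, mul_add, Finset.sum_add_distrib, hq, hmgt, hNA]
  calc ∑ j, ht k j * ∑ μ, A j μ * ginv μ β
      = ∑ μ, (∑ j, ht k j * A j μ) * ginv μ β := by
        simp only [Finset.mul_sum, Finset.sum_mul]
        rw [Finset.sum_comm]
        simp only [mul_assoc]
    _ = ∑ ν, m ν k * ∑ μ, g ν μ * ginv μ β := by
        simp only [key, Finset.mul_sum, Finset.sum_mul]
        rw [Finset.sum_comm]
        simp only [mul_assoc]
    _ = m β k := by simp [hg]

lemma sum_ht_mul_h (hhi : ∀ i j, ∑ k, hi i k * h k j = if i = j then 1 else 0)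
    (hh : ∀ i j, h i j = h j i)
    (hA : ∀ i μ, A i μ = ∑ j, h i j * q j μ)
    (hN : ∀ i j, N i j = ∑ α, m α i * q j α)
    (hht : ∀ i j, ht i j = hi i j + N i j) (k l : Fin 3) :
    ∑ i, ht k i * h l i = (if k = l then 1 else 0) + ∑ α, m α k * A l α := by
  simp only [hht, add_mul, Finset.sum_add_distrib]
  congr 1
  · simp only [hh l, hhi]
  · simp only [hA, hN, Finset.mul_sum, Finset.sum_mul]
    rw [Finset.sum_comm]
    refine Finset.sum_congr rfl fun α _ => Finset.sum_congr rfl fun i _ => ?_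
    ring

lemma sum_symm_mul_eps {s : Fin 3 → Fin 3 → ℝ} (hs : ∀ i j, s i j = s j i) (l : Fin 3) :
    ∑ i, ∑ k, eps l i k * s i k = 0 := by
  have h1 : ∑ i, ∑ k, eps l i k * s i k = ∑ i, ∑ k, eps l k i * s k i := Finset.sum_comm
  have h2 : ∀ i k, eps l k i * s k i = -(eps l i k * s i k) := fun i k => by
    rw [hs k i, eps_cycle l k i, eps_swap k i l, ← eps_cycle l i k]; ring
  have h3 : ∑ i, ∑ k, eps l k i * s k i = -∑ i, ∑ k, eps l i k * s i k := by
    simp only [← Finset.sum_neg_distrib]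
    exact Finset.sum_congr rfl fun i _ => Finset.sum_congr rfl fun k _ => h2 i k
  linarith

/-- The Levi-Civita part of the contraction of `h` with the effective inverse `ht`. -/
lemma sum_ht_mul_h_mul_eps
    (hhth : ∀ k l, ∑ i, ht k i * h l i = (if k = l then 1 else 0) + ∑ α, m α k * A l α)
    (p : Fin 3) :
    ∑ k, ∑ i, ht k i * ∑ l, h l i * eps k p l = ∑ α, ∑ k, m α k * ∑ l, A l α * eps k p l := by
  have : ∀ k, ∑ i, ht k i * ∑ l, h l i * eps k p l
      = ∑ α, m α k * ∑ l, A l α * eps k p l := by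
    intro k
    calc _ = ∑ l, (∑ i, ht k i * h l i) * eps k p l := by
          simp only [Finset.mul_sum, Finset.sum_mul]
          rw [Finset.sum_comm]
          simp only [mul_assoc]
      _ = ∑ l, (∑ α, m α k * A l α) * eps k p l := by
          simp only [hhth, add_mul, Finset.sum_add_distrib]
          have : eps k p k = 0 := by
            have := eps_swap k k p
            rw [eps_cycle k p k, eps_cycle p k k]; linarith
          simp [this]
      _ = _ := by
          simp only [Finset.mul_sum, Finset.sum_mul]
          rw [Finset.sum_comm]
          simp only [mul_assoc]
  simp only [this]
  exact Finset.sum_comm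

lemma sum_sum_mul_sum_comm {ι : Type*} [Fintype ι] (t : ι → ℝ) (s : Fin 3 → Fin 3 → ℝ)
    (u : ι → Fin 3 → Fin 3 → ℝ) :
    ∑ i, ∑ k, ∑ j, t j * (s i k * u j i k) = ∑ j, t j * ∑ i, ∑ k, s i k * u j i k := by
  simp only [Finset.mul_sum]
  rw [Finset.sum_comm (s := (Finset.univ : Finset ι))]
  exact Finset.sum_congr rfl fun i _ => Finset.sum_comm

lemma sum_mul_sum_sum_comm {ι : Type*} [Fintype ι] (t : Fin 3 → ℝ) (c : Fin 3 → ι → ι → ℝ)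
    (y : ι → ℝ) :
    ∑ j, t j * ∑ μ, ∑ β, c j μ β * y β = ∑ β, (∑ j, t j * ∑ μ, c j μ β) * y β := by
  simp only [Finset.mul_sum, Finset.sum_mul]
  rw [Finset.sum_comm (s := (Finset.univ : Finset ι))]
  refine Finset.sum_congr rfl fun j _ => ?_
  rw [Finset.sum_comm]
  simp only [mul_assoc]

lemma sum_F_mul_At {X : Fin n → Fin 3 → Fin 3 → ℝ} {F : Fin n → Fin n → Fin 3 → ℝ}
    {At : Fin n → Fin 3 → ℝ} (hG : ∀ μ ν, G μ ν = G ν μ)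
    (hAt : ∀ α i, At α i = -m α i)
    (hF : ∀ μ α i, F μ α i = (1/2) * ∑ β, G β μ * (-a i α β + ∑ j, q j β * X α i j))
    (μ : Fin n) :
    2 * ∑ α, ∑ i, F μ α i * At α i
      = ∑ β, G μ β * ((∑ α, ∑ i, m α i * a i α β) - ∑ α, ∑ i, ∑ j, m α i * q j β * X α i j) := by
  have h1 : ∀ β, (∑ α, ∑ i, m α i * a i α β) - ∑ α, ∑ i, ∑ j, m α i * q j β * X α i j
      = ∑ α, ∑ i, m α i * (a i α β - ∑ j, q j β * X α i j) := by
    intro β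
    simp only [mul_sub, Finset.sum_sub_distrib, Finset.mul_sum, mul_assoc]
  simp only [h1, Finset.mul_sum (s := (Finset.univ : Finset (Fin n)))]
  rw [Finset.sum_comm]
  refine Finset.sum_congr rfl fun α _ => ?_
  simp only [hF, hAt, Finset.mul_sum (s := (Finset.univ : Finset (Fin 3)))]
  rw [Finset.sum_comm]
  refine Finset.sum_congr rfl fun i _ => ?_
  simp only [Finset.mul_sum (s := (Finset.univ : Finset (Fin n))),
    Finset.sum_mul (s := (Finset.univ : Finset (Fin n)))]
  refine Finset.sum_congr rfl fun β _ => ?_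
  rw [hG β μ]; ring

lemma sum_D_mul_ht {D : Fin n → Fin 3 → Fin 3 → ℝ} {W : Fin 3 → ℝ}
    (hht : ∀ i j, ht i j = ht j i)
    (hD : ∀ μ i j, D μ i j = (1/2) * ∑ α, G μ α * (dh α i j - ∑ p, q p α *
      ((∑ l, h l i * eps j p l) + ∑ l, h l j * eps i p l)))
    (hW : ∀ p, ∑ k, ∑ i, ht k i * ∑ l, h l i * eps k p l = W p) (μ : Fin n) :
    ∑ i, ∑ j, D μ i j * ht i j
      = ∑ α, G μ α * ((1/2) * (∑ i, ∑ j, ht i j * dh α i j) - ∑ p, q p α * W p) := by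
  have hW' : ∀ p, ∑ i, ∑ j, ht i j * ((∑ l, h l i * eps j p l) + ∑ l, h l j * eps i p l)
      = 2 * W p := by
    intro p
    simp only [mul_add, Finset.sum_add_distrib, hW]
    rw [Finset.sum_comm, two_mul, ← hW p]
    congr 1
    exact Finset.sum_congr rfl fun i _ => Finset.sum_congr rfl fun j _ => by rw [hht]
  have h1 : ∀ α, ∑ p, q p α * W p = (1/2) * ∑ i, ∑ j, ht i j * ∑ p, q p α *
      ((∑ l, h l i * eps j p l) + ∑ l, h l j * eps i p l) := by
    intro α
    have h2 : ∀ p, q p α * W p = (1/2) * ∑ i, ∑ j, ht i j * (q p α *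
      ((∑ l, h l i * eps j p l) + ∑ l, h l j * eps i p l)) := by
      intro p
      rw [← mul_right_inj' (two_ne_zero (α := ℝ)),
        show 2 * (q p α * W p) = q p α * (2 * W p) by ring, ← hW' p]
      simp only [Finset.mul_sum (s := (Finset.univ : Finset (Fin 3)))]
      refine Finset.sum_congr rfl fun i _ => Finset.sum_congr rfl fun j _ => ?_
      ring
    simp only [h2]
    rw [← Finset.mul_sum, Finset.sum_comm]
    congr 1
    refine Finset.sum_congr rfl fun i _ => ?_
    rw [Finset.sum_comm]
    exact Finset.sum_congr rfl fun j _ => by rw [Finset.mul_sum]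
  have h3 : ∀ α, (1/2) * (∑ i, ∑ j, ht i j * dh α i j) - ∑ p, q p α * W p
      = ∑ i, ∑ j, (1/2) * (ht i j * (dh α i j - ∑ p, q p α *
      ((∑ l, h l i * eps j p l) + ∑ l, h l j * eps i p l))) := by
    intro α
    simp only [h1, ← Finset.mul_sum, mul_sub, Finset.sum_sub_distrib]
  simp only [h3]
  simp only [← Finset.mul_sum, mul_left_comm _ (1/2 : ℝ)]
  rw [← sum_sum_mul_sum_comm, Finset.mul_sum]
  refine Finset.sum_congr rfl fun i _ => ?_
  rw [Finset.mul_sum]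
  refine Finset.sum_congr rfl fun j _ => ?_
  rw [hD, mul_assoc, Finset.sum_mul]
  exact congrArg _ (Finset.sum_congr rfl fun α _ => by ring)

/-- The first-order coefficient of `∂_μ f`. -/
lemma derivative_coefficient {Γ Γt : Fin n → Fin n → Fin n → ℝ} {X : Fin n → Fin 3 → Fin 3 → ℝ}
    {S : Fin n → ℝ} {W : Fin 3 → ℝ} {cF cD : Fin n → ℝ}
    (hht : ∀ i j, ht i j = hi i j + N i j)
    (hX : ∀ α i j, X α i j = dh α i j - ∑ l, A l α * eps i j l)
    (hS : ∀ ρ, S ρ = (∑ ν, ∑ j, m ν j * a j ν ρ) - (∑ ν, ∑ j, ∑ k, m ν j * dh ν j k * q k ρ)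
      + (1/2) * ∑ j, ∑ k, N j k * dh ρ j k)
    (hW : ∀ p, W p = ∑ α, ∑ k, m α k * ∑ l, A l α * eps k p l)
    (hΓ : ∀ σ, ∑ α, ∑ β, Γ σ α β * G α β
      = (∑ α, ∑ β, Γt σ α β * G α β) + ∑ ρ, G σ ρ * S ρ)
    (hF : ∀ μ, cF μ
      = ∑ β, G μ β * ((∑ α, ∑ i, m α i * a i α β) - ∑ α, ∑ i, ∑ j, m α i * q j β * X α i j))
    (hD : ∀ μ, cD μ
      = ∑ α, G μ α * ((1/2) * (∑ i, ∑ j, ht i j * dh α i j) - ∑ p, q p α * W p)) (μ : Fin n) :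
    -(∑ α, ∑ β, Γ μ α β * G α β) + cF μ + cD μ
      = -(∑ α, ∑ β, Γt μ α β * G α β) + (1/2) * ∑ α, G μ α * ∑ i, ∑ j, hi i j * dh α i j := by
  have key : ∀ β, -S β + ((∑ α, ∑ i, m α i * a i α β)
      - ∑ α, ∑ i, ∑ j, m α i * q j β * X α i j)
      + ((1/2) * (∑ i, ∑ j, ht i j * dh β i j) - ∑ p, q p β * W p)
      = (1/2) * ∑ i, ∑ j, hi i j * dh β i j := by
    intro β
    have h1 : ∑ p, q p β * W p = ∑ α, ∑ i, ∑ j, m α i * q j β * ∑ l, A l α * eps i j l := by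
      simp only [hW, Finset.mul_sum (s := (Finset.univ : Finset (Fin n)))]
      rw [Finset.sum_comm]
      refine Finset.sum_congr rfl fun α _ => ?_
      simp only [fun (x : ℝ) (w : Fin 3 → ℝ) => Finset.mul_sum Finset.univ w x]
      rw [Finset.sum_comm]
      refine Finset.sum_congr rfl fun α _ => Finset.sum_congr rfl fun j _ =>
        Finset.sum_congr rfl fun l _ => ?_
      ring
    have h2 : ∑ α, ∑ i, ∑ j, m α i * q j β * X α i j
        = (∑ ν, ∑ j, ∑ k, m ν j * dh ν j k * q k β)
          - ∑ α, ∑ i, ∑ j, m α i * q j β * ∑ l, A l α * eps i j l := by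
      simp only [← Finset.sum_sub_distrib]
      refine Finset.sum_congr rfl fun α _ => Finset.sum_congr rfl fun j _ =>
        Finset.sum_congr rfl fun l _ => ?_
      rw [hX]; ring
    have h3 : ∑ i, ∑ j, ht i j * dh β i j
        = (∑ i, ∑ j, hi i j * dh β i j) + ∑ i, ∑ j, N i j * dh β i j := by
      simp only [hht, add_mul, Finset.sum_add_distrib]
    rw [h1, h2, h3, hS]; ring
  have h4 : (1/2) * ∑ α, G μ α * ∑ i, ∑ j, hi i j * dh α i j
      = -(∑ ρ, G μ ρ * S ρ) + cF μ + cD μ := by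
    rw [hF, hD, ← Finset.sum_neg_distrib, ← Finset.sum_add_distrib, ← Finset.sum_add_distrib,
      Finset.mul_sum]
    refine Finset.sum_congr rfl fun β _ => ?_
    linear_combination (-G μ β) * key β
  rw [hΓ, h4]; ring

lemma sum_E_mul_G {E : Fin 3 → Fin n → Fin n → ℝ} {Γ : Fin n → Fin n → Fin n → ℝ}
    {dA : Fin n → Fin 3 → Fin n → ℝ} (hG : ∀ μ ν, G μ ν = G ν μ)
    (hq : ∀ i μ, q i μ = ∑ j, hi i j * A j μ)
    (hE : ∀ k α β, E k α β = -(1/2) * ∑ i, hi k i *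
      (dA α i β + dA β i α - 2 * ∑ μ, A i μ * Γ μ α β)) (k : Fin 3) :
    ∑ α, ∑ β, E k α β * G α β = -(∑ α, ∑ β, G α β * ∑ i, hi k i * dA α i β)
      + ∑ μ, q k μ * ∑ α, ∑ β, Γ μ α β * G α β := by
  have h1 : ∑ α, ∑ β, G α β * ∑ i, hi k i * dA β i α
      = ∑ α, ∑ β, G α β * ∑ i, hi k i * dA α i β := by
    rw [Finset.sum_comm]
    exact Finset.sum_congr rfl fun α _ => Finset.sum_congr rfl fun β _ => by rw [hG]
  have h2 : ∑ μ, q k μ * ∑ α, ∑ β, Γ μ α β * G α β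
      = ∑ α, ∑ β, G α β * ∑ i, hi k i * ∑ μ, A i μ * Γ μ α β := by
    simp only [hq, Finset.mul_sum (s := (Finset.univ : Finset (Fin n)))]
    rw [Finset.sum_comm]
    refine Finset.sum_congr rfl fun α _ => ?_
    rw [Finset.sum_comm]
    refine Finset.sum_congr rfl fun β _ => ?_
    simp only [Finset.mul_sum, Finset.sum_mul]
    rw [Finset.sum_comm]
    exact Finset.sum_congr rfl fun i _ => Finset.sum_congr rfl fun μ _ => by ring
  have h3 : ∀ α β, E k α β * G α β = -(1/2) * (G α β * ∑ i, hi k i * dA α i β)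
      - (1/2) * (G α β * ∑ i, hi k i * dA β i α)
      + G α β * ∑ i, hi k i * ∑ μ, A i μ * Γ μ α β := by
    intro α β
    rw [hE]
    simp only [mul_sub, mul_add, Finset.sum_sub_distrib, Finset.sum_add_distrib]
    have : ∑ i, hi k i * (2 * ∑ μ, A i μ * Γ μ α β)
        = 2 * ∑ i, hi k i * ∑ μ, A i μ * Γ μ α β := by
      rw [Finset.mul_sum]
      exact Finset.sum_congr rfl fun i _ => by ring
    rw [this]; ring
  simp only [h3, Finset.sum_sub_distrib, Finset.sum_add_distrib, ← Finset.mul_sum, h1, h2]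
  ring

lemma sum_B_mul_At {B : Fin 3 → Fin n → Fin 3 → ℝ} {At : Fin n → Fin 3 → ℝ}
    {X : Fin n → Fin 3 → Fin 3 → ℝ}
    (hAt : ∀ α i, At α i = -m α i)
    (hmk : ∀ k β, ∑ j, ht j k * ∑ μ, A j μ * ginv μ β = m β k)
    (hB : ∀ k α i, B k α i = (1/2) * ∑ j, ht j k *
      ((∑ μ, ∑ β, ginv μ β * A j μ * a i α β) - X α i j)) (k : Fin 3) :
    2 * ∑ α, ∑ i, B k α i * At α i
      = -(∑ α, ∑ i, m α i * ∑ β, m β k * a i α β) + ∑ α, ∑ i, m α i * ∑ j, ht j k * X α i j := by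
  have h1 : ∀ α i, ∑ j, ht j k * ∑ μ, ∑ β, ginv μ β * A j μ * a i α β
      = ∑ β, m β k * a i α β := by
    intro α i
    rw [sum_mul_sum_sum_comm (fun j => ht j k) (fun j μ β => ginv μ β * A j μ)]
    simp only [← hmk, mul_comm (ginv _ _)]
  have h2 : ∀ α i, B k α i * At α i = (1/2) * (-(m α i * ∑ β, m β k * a i α β)
      + m α i * ∑ j, ht j k * X α i j) := by
    intro α i
    rw [hB, hAt, ← h1]
    simp only [mul_sub, Finset.sum_sub_distrib]
    ring
  simp only [h2, ← Finset.mul_sum, Finset.sum_add_distrib, Finset.sum_neg_distrib]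
  ring

lemma sum_H_mul_ht {H : Fin 3 → Fin 3 → Fin 3 → ℝ} {W : Fin 3 → ℝ}
    (hht : ∀ i j, ht i j = ht j i)
    (hmk : ∀ k β, ∑ j, ht j k * ∑ μ, A j μ * ginv μ β = m β k)
    (hH : ∀ l' i k, H l' i k = (1/2) * (∑ j, ht j l' *
      ((∑ l, h l i * eps k j l) + (∑ l, h l k * eps i j l)
        - ∑ μ, ∑ α, A j μ * ginv μ α * dh α i k)) - (1/2) * eps l' i k)
    (hW : ∀ p, ∑ k, ∑ i, ht k i * ∑ l, h l i * eps k p l = W p) (l : Fin 3) :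
    ∑ i, ∑ k, H l i k * ht i k
      = (∑ j, ht j l * W j) - (1/2) * ∑ α, m α l * ∑ i, ∑ k, ht i k * dh α i k := by
  have h1 : ∀ i k, ∑ j, ht j l * ∑ μ, ∑ α, A j μ * ginv μ α * dh α i k
      = ∑ α, m α l * dh α i k := by
    intro i k
    rw [sum_mul_sum_sum_comm (fun j => ht j l) (fun j μ β => A j μ * ginv μ β)]
    simp only [← hmk]
  have h2 : ∀ i k, H l i k * ht i k
      = (1/2) * (∑ j, ht j l * (ht i k * ∑ n', h n' i * eps k j n'))
        + (1/2) * (∑ j, ht j l * (ht i k * ∑ n', h n' k * eps i j n'))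
        - (1/2) * (∑ α, m α l * (ht i k * dh α i k)) - (1/2) * (eps l i k * ht i k) := by
    intro i k
    have e1 : ∀ u : Fin 3 → ℝ, ∑ j, ht j l * (ht i k * u j) = ht i k * ∑ j, ht j l * u j :=
      fun u => by
        rw [Finset.mul_sum]
        exact Finset.sum_congr rfl fun j _ => by ring
    have e2 : ∑ α, m α l * (ht i k * dh α i k) = ht i k * ∑ α, m α l * dh α i k := by
      rw [Finset.mul_sum]
      exact Finset.sum_congr rfl fun j _ => by ring
    rw [e1, e1, e2, ← h1, hH]
    simp only [mul_sub, mul_add, Finset.sum_sub_distrib, Finset.sum_add_distrib]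
    ring
  have hW'' : ∀ p, ∑ i, ∑ k, ht i k * ∑ n', h n' i * eps k p n' = W p := by
    intro p
    rw [Finset.sum_comm, ← hW p]
    exact Finset.sum_congr rfl fun i _ => Finset.sum_congr rfl fun j _ => by rw [hht]
  have hW3 : ∀ p, ∑ i, ∑ k, ht i k * ∑ n', h n' k * eps i p n' = W p := hW
  simp only [h2, Finset.sum_sub_distrib, Finset.sum_add_distrib, ← Finset.mul_sum,
    sum_symm_mul_eps hht]
  rw [sum_sum_mul_sum_comm, sum_sum_mul_sum_comm (fun j => ht j l), sum_sum_mul_sum_comm]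
  simp only [hW'', hW3]
  ring

/-- The zeroth-order coefficient, multiplying `P_i f`. -/
lemma potential_coefficient {Γ Γt : Fin n → Fin n → Fin n → ℝ} {X : Fin n → Fin 3 → Fin 3 → ℝ}
    {S : Fin n → ℝ} {W : Fin 3 → ℝ} {dA dq : Fin n → Fin 3 → Fin n → ℝ} {cE cB cH : Fin 3 → ℝ}
    (hG : ∀ μ ν, G μ ν = G ν μ)
    (hhi : ∀ i j, hi i j = hi j i)
    (hdh : ∀ α i j, dh α i j = dh α j i)
    (hNs : ∀ i j, N i j = N j i)
    (hm : ∀ α i, m α i = ∑ β, G α β * q i β)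
    (hN : ∀ i j, N i j = ∑ α, m α i * q j α)
    (hht : ∀ i j, ht i j = hi i j + N i j)
    (hX : ∀ α i j, X α i j = dh α i j - ∑ l, A l α * eps i j l)
    (hdq : ∀ α i β, dq α i β = ∑ j, hi i j * (dA α j β - ∑ k, dh α j k * q k β))
    (hS : ∀ ρ, S ρ = (∑ ν, ∑ j, m ν j * a j ν ρ) - (∑ ν, ∑ j, ∑ k, m ν j * dh ν j k * q k ρ)
      + (1/2) * ∑ j, ∑ k, N j k * dh ρ j k)
    (hW : ∀ p, W p = ∑ α, ∑ k, m α k * ∑ l, A l α * eps k p l)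
    (hΓ : ∀ σ, ∑ α, ∑ β, Γ σ α β * G α β
      = (∑ α, ∑ β, Γt σ α β * G α β) + ∑ ρ, G σ ρ * S ρ)
    (hE : ∀ k, cE k = -(∑ α, ∑ β, G α β * ∑ i, hi k i * dA α i β)
      + ∑ μ, q k μ * ∑ α, ∑ β, Γ μ α β * G α β)
    (hB : ∀ k, cB k
      = -(∑ α, ∑ i, m α i * ∑ β, m β k * a i α β) + ∑ α, ∑ i, m α i * ∑ j, ht j k * X α i j)
    (hH : ∀ l, cH l
      = (∑ j, ht j l * W j) - (1/2) * ∑ α, m α l * ∑ i, ∑ k, ht i k * dh α i k) (k : Fin 3) :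
    cE k + cB k + cH k
      = -(∑ α, ∑ β, G α β * dq α k β) + (∑ μ, q k μ * ∑ α, ∑ β, Γt μ α β * G α β)
        - (1/2) * ∑ α, m α k * ∑ i, ∑ j, hi i j * dh α i j := by
  have h1 : ∑ μ, q k μ * ∑ ρ, G μ ρ * S ρ = ∑ ρ, m ρ k * S ρ := by
    simp only [hm, Finset.mul_sum, Finset.sum_mul]
    rw [Finset.sum_comm]
    exact Finset.sum_congr rfl fun μ _ => Finset.sum_congr rfl fun ρ _ => by rw [hG ρ μ]; ring
  have h2 : ∑ α, ∑ β, G α β * dq α k β = (∑ α, ∑ β, G α β * ∑ i, hi k i * dA α i β)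
      - ∑ α, ∑ i, ∑ j, m α i * hi k j * dh α j i := by
    rw [← Finset.sum_sub_distrib]
    refine Finset.sum_congr rfl fun α _ => ?_
    have : ∑ i, ∑ j, m α i * hi k j * dh α j i
        = ∑ β, G α β * ∑ j, hi k j * ∑ l, dh α j l * q l β := by
      have e : ∀ i, ∑ j, m α i * hi k j * dh α j i
          = ∑ β, G α β * (q i β * ∑ j, hi k j * dh α j i) := by
        intro i
        simp only [mul_assoc, ← Finset.mul_sum]
        rw [hm, Finset.sum_mul]
        simp only [mul_assoc]
      simp only [e]
      rw [Finset.sum_comm]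
      refine Finset.sum_congr rfl fun β _ => ?_
      rw [← Finset.mul_sum]
      congr 1
      simp only [Finset.mul_sum]
      rw [Finset.sum_comm]
      exact Finset.sum_congr rfl fun i _ => Finset.sum_congr rfl fun μ _ => by ring
    rw [this, ← Finset.sum_sub_distrib]
    refine Finset.sum_congr rfl fun β _ => ?_
    simp only [hdq, mul_sub, Finset.sum_sub_distrib]
  have h3 : ∑ ρ, m ρ k * S ρ = (∑ α, ∑ i, m α i * ∑ β, m β k * a i α β)
      - (∑ α, ∑ i, ∑ j, m α i * N k j * dh α i j)
      + (1/2) * ∑ ρ, m ρ k * ∑ i, ∑ j, N i j * dh ρ i j := by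
    have e1 : ∑ ρ, m ρ k * ∑ ν, ∑ j, m ν j * a j ν ρ
        = ∑ α, ∑ i, m α i * ∑ β, m β k * a i α β := by
      simp only [Finset.mul_sum]
      rw [Finset.sum_comm]
      refine Finset.sum_congr rfl fun α _ => ?_
      rw [Finset.sum_comm]
      exact Finset.sum_congr rfl fun i _ => Finset.sum_congr rfl fun μ _ => by ring
    have e2 : ∑ ρ, m ρ k * ∑ ν, ∑ j, ∑ l, m ν j * dh ν j l * q l ρ
        = ∑ α, ∑ i, ∑ j, m α i * N k j * dh α i j := by
      simp only [hN, Finset.mul_sum, Finset.sum_mul]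
      rw [Finset.sum_comm]
      refine Finset.sum_congr rfl fun α _ => ?_
      rw [Finset.sum_comm]
      refine Finset.sum_congr rfl fun i _ => ?_
      rw [Finset.sum_comm]
      exact Finset.sum_congr rfl fun i _ => Finset.sum_congr rfl fun μ _ => by ring
    rw [← e1, ← e2, Finset.mul_sum, ← Finset.sum_sub_distrib, ← Finset.sum_add_distrib]
    exact Finset.sum_congr rfl fun ρ _ => by rw [hS]; ring
  have h4 : ∑ α, ∑ i, m α i * ∑ j, ht j k * X α i j
      = (∑ α, ∑ i, ∑ j, m α i * hi k j * dh α j i)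
        + (∑ α, ∑ i, ∑ j, m α i * N k j * dh α i j) - ∑ j, ht j k * W j := by
    have e1 : ∑ j, ht j k * W j
        = ∑ α, ∑ i, ∑ j, m α i * ht j k * ∑ l, A l α * eps i j l := by
      simp only [hW, fun (x : ℝ) (w : Fin n → ℝ) => Finset.mul_sum Finset.univ w x]
      rw [Finset.sum_comm]
      refine Finset.sum_congr rfl fun α _ => ?_
      simp only [fun (x : ℝ) (w : Fin 3 → ℝ) => Finset.mul_sum Finset.univ w x]
      rw [Finset.sum_comm]
      exact Finset.sum_congr rfl fun i _ => Finset.sum_congr rfl fun j _ =>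
        Finset.sum_congr rfl fun l _ => by ring
    rw [e1]
    simp only [← Finset.sum_sub_distrib, ← Finset.sum_add_distrib]
    refine Finset.sum_congr rfl fun α _ => Finset.sum_congr rfl fun i _ => ?_
    rw [Finset.mul_sum]
    refine Finset.sum_congr rfl fun j _ => ?_
    rw [hX, hdh α j i]
    have : ht j k = hi k j + N k j := by rw [hht, hhi, hNs]
    rw [this]; ring
  have h5 : ∑ α, m α k * ∑ i, ∑ j, ht i j * dh α i j
      = (∑ α, m α k * ∑ i, ∑ j, hi i j * dh α i j)
        + ∑ α, m α k * ∑ i, ∑ j, N i j * dh α i j := by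
    simp only [hht, add_mul, mul_add, Finset.sum_add_distrib]
  have h6 : ∑ μ, q k μ * ∑ α, ∑ β, Γ μ α β * G α β
      = (∑ μ, q k μ * ∑ α, ∑ β, Γt μ α β * G α β) + ∑ ρ, m ρ k * S ρ := by
    simp only [hΓ, mul_add, Finset.sum_add_distrib, h1]
  rw [hE, hB, hH, h2, h4, h5, h6, h3]; ring

lemma sum_smul_sum_smul_comm {ι V : Type*} [Fintype ι] [AddCommGroup V] [Module ℝ V]
    (c : ι → Fin n → Fin n → ℝ) (v : ι → V) :
    ∑ α, ∑ β, G α β • ∑ i, c i α β • v i = ∑ i, (∑ α, ∑ β, c i α β * G α β) • v i := by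
  simp only [Finset.smul_sum, Finset.sum_smul, smul_smul]
  rw [Finset.sum_comm (s := (Finset.univ : Finset ι))]
  refine Finset.sum_congr rfl fun α _ => ?_
  rw [Finset.sum_comm]
  exact Finset.sum_congr rfl fun i _ => Finset.sum_congr rfl fun β _ => by rw [mul_comm]

/-- Expansion of the gauge-covariant Laplacian at a point. -/
lemma covariant_laplacian_expansion {V : Type*} [AddCommGroup V] [Module ℝ V]
    {At : Fin n → Fin 3 → ℝ} {Γt : Fin n → Fin n → Fin n → ℝ} {dq : Fin n → Fin 3 → Fin n → ℝ}
    {L : Fin n → ℝ} {cP : Fin 3 → ℝ} {cd : Fin n → ℝ}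
    {ddf : Fin n → Fin n → V} {df : Fin n → V} {Pf : Fin 3 → V} {Pdf : Fin 3 → Fin n → V}
    {PPf : Fin 3 → Fin 3 → V}
    (hG : ∀ μ ν, G μ ν = G ν μ)
    (hm : ∀ α i, m α i = ∑ β, G α β * q i β)
    (hN : ∀ i j, N i j = ∑ α, m α i * q j α)
    (hht : ∀ i j, ht i j = hi i j + N i j)
    (hAt : ∀ α i, At α i = -m α i)
    (hcP : ∀ k, cP k = -(∑ α, ∑ β, G α β * dq α k β)
      + (∑ μ, q k μ * ∑ α, ∑ β, Γt μ α β * G α β) - (1/2) * ∑ α, m α k * L α)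
    (hcd : ∀ μ, cd μ = -(∑ α, ∑ β, Γt μ α β * G α β) + (1/2) * ∑ α, G μ α * L α) :
    (∑ α, ∑ β, G α β • ddf α β) + (∑ i, ∑ j, ht i j • PPf i j)
      + 2 • (∑ α, ∑ i, At α i • Pdf i α) + (∑ i, cP i • Pf i) + (∑ μ, cd μ • df μ)
    = (∑ α, ∑ β, G α β • ((ddf α β - (∑ i, (dq α i β • Pf i + q i β • Pdf i α))
          - ∑ i, q i α • (Pdf i β - ∑ j, q j β • PPf i j))
          - ∑ μ, Γt μ α β • (df μ - ∑ i, q i μ • Pf i)))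
      + (∑ i, ∑ j, hi i j • PPf i j)
      + (1/2 : ℝ) • ∑ α, ∑ β, (G α β * L α) • (df β - ∑ k, q k β • Pf k) := by
  have e1 : ∑ α, ∑ β, G α β • ∑ i, q i β • Pdf i α = ∑ α, ∑ i, m α i • Pdf i α := by
    refine Finset.sum_congr rfl fun α _ => ?_
    simp only [hm, Finset.smul_sum, Finset.sum_smul, smul_smul]
    exact Finset.sum_comm
  have e2 : ∑ α, ∑ β, G α β • ∑ i, q i α • Pdf i β = ∑ α, ∑ i, m α i • Pdf i α := by
    rw [← e1, Finset.sum_comm]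
    exact Finset.sum_congr rfl fun α _ => Finset.sum_congr rfl fun β _ => by rw [hG]
  have e3 : ∑ α, ∑ β, G α β • ∑ i, q i α • ∑ j, q j β • PPf i j
      = ∑ i, ∑ j, N i j • PPf i j := by
    have h1 : ∀ i j, N i j = ∑ α, ∑ β, q i α * q j β * G α β := by
      intro i j
      simp only [hN, hm, Finset.sum_mul]
      rw [Finset.sum_comm]
      exact Finset.sum_congr rfl fun α _ => Finset.sum_congr rfl fun β _ => by rw [hG β α]; ring
    have h2 : ∀ α β, ∑ i, q i α • ∑ j, q j β • PPf i j
        = ∑ p : Fin 3 × Fin 3, (q p.1 α * q p.2 β) • PPf p.1 p.2 := by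
      intro α β
      simp only [Fintype.sum_prod_type, Finset.smul_sum, smul_smul]
    simp only [h2]
    rw [sum_smul_sum_smul_comm (fun p : Fin 3 × Fin 3 => fun α β => q p.1 α * q p.2 β),
      Fintype.sum_prod_type]
    simp only [h1]
  have e4 : ∑ α, ∑ β, G α β • ∑ i, dq α i β • Pf i
      = ∑ i, (∑ α, ∑ β, G α β * dq α i β) • Pf i := by
    rw [sum_smul_sum_smul_comm (fun i α β => dq α i β)]
    simp only [mul_comm]
  have e5 := sum_smul_sum_smul_comm (G := G) Γt df
  have e6 : ∑ α, ∑ β, G α β • ∑ μ, Γt μ α β • ∑ i, q i μ • Pf i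
      = ∑ i, (∑ μ, q i μ * ∑ α, ∑ β, Γt μ α β * G α β) • Pf i := by
    rw [sum_smul_sum_smul_comm]
    simp only [Finset.smul_sum, smul_smul]
    rw [Finset.sum_comm]
    refine Finset.sum_congr rfl fun i _ => ?_
    rw [Finset.sum_smul]
    exact Finset.sum_congr rfl fun μ _ => by rw [mul_comm]
  have e7 : ∑ α, ∑ β, (G α β * L α) • df β = ∑ μ, (∑ α, G μ α * L α) • df μ := by
    rw [Finset.sum_comm]
    refine Finset.sum_congr rfl fun μ _ => ?_
    rw [Finset.sum_smul]
    exact Finset.sum_congr rfl fun α _ => by rw [hG]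
  have e8 : ∑ α, ∑ β, (G α β * L α) • ∑ k, q k β • Pf k
      = ∑ k, (∑ α, m α k * L α) • Pf k := by
    have h1 : ∀ α β, (G α β * L α) • ∑ k, q k β • Pf k
        = G α β • ∑ k, (q k β * L α) • Pf k := by
      intro α β
      simp only [Finset.smul_sum, smul_smul]
      exact Finset.sum_congr rfl fun k _ => by congr 1; ring
    simp only [h1]
    rw [sum_smul_sum_smul_comm (fun k α β => q k β * L α)]
    refine Finset.sum_congr rfl fun k _ => ?_
    congr 1
    refine Finset.sum_congr rfl fun α _ => ?_
    rw [hm, Finset.sum_mul]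
    exact Finset.sum_congr rfl fun k _ => by ring
  simp only [smul_sub, smul_add, Finset.sum_sub_distrib, Finset.sum_add_distrib, e1, e2, e3, e4,
    e5, e6, e7, e8]
  simp only [hht, hAt, hcP, hcd, add_smul, sub_smul, neg_smul, mul_smul, Finset.sum_sub_distrib,
    Finset.sum_add_distrib, Finset.sum_neg_distrib, ← Finset.smul_sum]
  module

end Pointwise

section Calculus

lemma inverse_symm {ι : Type*} [Fintype ι] [DecidableEq ι] {M N : ι → ι → ℝ}
    (hM : ∀ i j, M i j = M j i)
    (h : ∀ i j, ∑ k, M i k * N k j = if i = j then 1 else 0) (i j : ι) : N i j = N j i := by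
  have e1 : (Matrix.of N).transpose * Matrix.of M = 1 := by
    ext i j
    rw [Matrix.mul_apply, Matrix.one_apply]
    simp only [eq_comm (a := i), ← h]
    exact Finset.sum_congr rfl fun k _ => by
      rw [Matrix.transpose_apply, Matrix.of_apply, Matrix.of_apply, hM, mul_comm]
  have e2 : Matrix.of M * Matrix.of N = 1 := by
    ext i j
    rw [Matrix.mul_apply, Matrix.one_apply, ← h]
    rfl
  have e3 : (Matrix.of N).transpose = Matrix.of N := left_inv_eq_right_inv e1 e2
  exact congrFun (congrFun e3 j) i

variable {n : ℕ} {W : Type*} [NormedAddCommGroup W] [NormedSpace ℝ W] {x : Fin n → ℝ}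

lemma pd_congr {u v : (Fin n → ℝ) → W} (huv : u =ᶠ[nhds x] v) (μ : Fin n) :
    pd μ u x = pd μ v x := by
  rw [pd, pd, huv.fderiv_eq]

lemma pd_sub {u v : (Fin n → ℝ) → W} (hu : DifferentiableAt ℝ u x)
    (hv : DifferentiableAt ℝ v x) (μ : Fin n) :
    pd μ (fun y => u y - v y) x = pd μ u x - pd μ v x := by
  simp only [pd]
  rw [fderiv_fun_sub hu hv]
  rfl

lemma pd_sum {ι : Type*} [Fintype ι] {u : ι → (Fin n → ℝ) → W}
    (hu : ∀ i, DifferentiableAt ℝ (u i) x) (μ : Fin n) :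
    pd μ (fun y => ∑ i, u i y) x = ∑ i, pd μ (u i) x := by
  simp only [pd]
  rw [fderiv_fun_sum fun i _ => hu i]
  simp

lemma pd_smul {c : (Fin n → ℝ) → ℝ} {u : (Fin n → ℝ) → W} (hc : DifferentiableAt ℝ c x)
    (hu : DifferentiableAt ℝ u x) (μ : Fin n) :
    pd μ (fun y => c y • u y) x = pd μ c x • u x + c x • pd μ u x := by
  simp only [pd]
  rw [fderiv_fun_smul hc hu]
  simp [add_comm]

lemma pd_mul {c u : (Fin n → ℝ) → ℝ} (hc : DifferentiableAt ℝ c x)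
    (hu : DifferentiableAt ℝ u x) (μ : Fin n) :
    pd μ (fun y => c y * u y) x = pd μ c x * u x + c x * pd μ u x :=
  pd_smul hc hu μ

lemma pd_clm_apply {V : Type*} [NormedAddCommGroup V] [NormedSpace ℂ V] (P : V →L[ℂ] V)
    {u : (Fin n → ℝ) → V} (hu : DifferentiableAt ℝ u x) (μ : Fin n) :
    pd μ (fun y => P (u y)) x = P (pd μ u x) := by
  have := ((P.restrictScalars ℝ).hasFDerivAt.comp x hu.hasFDerivAt).fderiv
  simp only [pd]
  exact congrArg (fun L : (Fin n → ℝ) →L[ℝ] V => L (Pi.single μ 1)) this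

lemma differentiableAt_inverse_entry {h hinv : Fin 3 → Fin 3 → (Fin n → ℝ) → ℝ}
    (hh : ∀ i j, DifferentiableAt ℝ (h i j) x)
    (hinv_eq : ∀ᶠ y in nhds x, ∀ i j, ∑ k, h i k y * hinv k j y = if i = j then 1 else 0)
    (i j : Fin 3) : DifferentiableAt ℝ (hinv i j) x := by
  have hmul : ∀ᶠ y in nhds x, (Matrix.of fun i j => h i j y) * (Matrix.of fun i j => hinv i j y)
      = 1 := by
    filter_upwards [hinv_eq] with y hy
    ext i j
    rw [Matrix.mul_apply, Matrix.one_apply, ← hy]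
    rfl
  have hdet : (Matrix.of fun i j => h i j x).det ≠ 0 :=
    (Matrix.isUnit_det_of_right_inverse hmul.self_of_nhds).ne_zero
  have heq : (fun y => (Matrix.of fun i j => h i j y).det⁻¹
      * (Matrix.of fun i j => h i j y).adjugate i j) =ᶠ[nhds x] hinv i j := by
    filter_upwards [hmul] with y hy
    have := congrFun (congrFun (Matrix.inv_eq_right_inv hy) i) j
    rw [Matrix.inv_def, Ring.inverse_eq_inv'] at this
    exact this
  refine DifferentiableAt.congr_of_eventuallyEq (DifferentiableAt.mul ?_ ?_) heq.symm
  · refine DifferentiableAt.inv ?_ hdet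
    simp only [Matrix.det_fin_three, Matrix.of_apply]
    fun_prop
  · simp only [Matrix.adjugate_fin_three, Matrix.of_apply]
    fin_cases i <;> fin_cases j <;> simp <;> fun_prop

lemma pd_inverse {h hinv : Fin 3 → Fin 3 → (Fin n → ℝ) → ℝ}
    (hh : ∀ i j, DifferentiableAt ℝ (h i j) x)
    (hhinv : ∀ i j, DifferentiableAt ℝ (hinv i j) x)
    (h_right : ∀ i j, ∑ k, h i k x * hinv k j x = if i = j then 1 else 0)
    (h_left : ∀ᶠ y in nhds x, ∀ i j, ∑ k, hinv i k y * h k j y = if i = j then 1 else 0)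
    (μ : Fin n) (i l : Fin 3) :
    pd μ (hinv i l) x = -∑ j, ∑ k, hinv i k x * pd μ (h k j) x * hinv j l x := by
  have h0 : ∀ j, ∑ k, pd μ (hinv i k) x * h k j x = -∑ k, hinv i k x * pd μ (h k j) x := by
    intro j
    have e1 : pd μ (fun y => ∑ k, hinv i k y * h k j y) x = 0 := by
      rw [pd_congr (v := fun _ => if i = j then (1 : ℝ) else 0) (h_left.mono fun y hy => hy i j)]
      simp [pd]
    rw [pd_sum fun k => (hhinv i k).fun_mul (hh k j)] at e1
    simp only [pd_mul (hhinv i _) (hh _ j), Finset.sum_add_distrib] at e1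
    linarith
  calc pd μ (hinv i l) x = ∑ k, pd μ (hinv i k) x * ∑ j, h k j x * hinv j l x := by
        simp [h_right]
    _ = ∑ j, (∑ k, pd μ (hinv i k) x * h k j x) * hinv j l x := by
        simp only [Finset.mul_sum, Finset.sum_mul]
        rw [Finset.sum_comm]
        simp only [mul_assoc]
    _ = _ := by simp only [h0, neg_mul, Finset.sum_neg_distrib, Finset.sum_mul]

end Calculus

/-- The QRG Laplacian on the product of spacetime and a fuzzy sphere with general metric
`h_{ij}(x)`, expressed through the quantum Levi-Civita connection coefficients, equals the
gauge-covariant Laplacian for `g̃` plus the fuzzy sphere Laplacian plus a coupling between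
the log-derivative of `h` and the covariant derivative of `f` (Proposition 6.1). -/
theorem stmt16 (n : ℕ) (hn : 1 ≤ n)
    (U : Set (Fin n → ℝ)) (hU : IsOpen U)
    (g ginv : Fin n → Fin n → (Fin n → ℝ) → ℝ)
    (h hinv : Fin 3 → Fin 3 → (Fin n → ℝ) → ℝ)
    (A : Fin 3 → Fin n → (Fin n → ℝ) → ℝ)
    (hg_smooth : ∀ μ ν, ContDiffOn ℝ (⊤ : ℕ∞) (g μ ν) U)
    (hh_smooth : ∀ i j, ContDiffOn ℝ (⊤ : ℕ∞) (h i j) U)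
    (hA_smooth : ∀ i μ, ContDiffOn ℝ (⊤ : ℕ∞) (A i μ) U)
    (hg_symm : ∀ μ ν x, g μ ν x = g ν μ x)
    (hh_symm : ∀ i j x, h i j x = h j i x)
    (hg_inv : ∀ x ∈ U, ∀ μ ν, ∑ ρ, g μ ρ x * ginv ρ ν x = if μ = ν then 1 else 0)
    (hg_inv' : ∀ x ∈ U, ∀ μ ν, ∑ ρ, ginv μ ρ x * g ρ ν x = if μ = ν then 1 else 0)
    (hh_inv : ∀ x ∈ U, ∀ i j, ∑ k, h i k x * hinv k j x = if i = j then 1 else 0)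
    (hh_inv' : ∀ x ∈ U, ∀ i j, ∑ k, hinv i k x * h k j x = if i = j then 1 else 0)
    -- the effective metric g̃ and its inverse
    (gt gtinv : Fin n → Fin n → (Fin n → ℝ) → ℝ)
    (hgt : ∀ μ ν x, gt μ ν x = g μ ν x - ∑ i, ∑ j, hinv i j x * A i μ x * A j ν x)
    (hgtinv_smooth : ∀ μ ν, ContDiffOn ℝ (⊤ : ℕ∞) (gtinv μ ν) U)
    (hgt_inv : ∀ x ∈ U, ∀ μ ν, ∑ ρ, gt μ ρ x * gtinv ρ ν x = if μ = ν then 1 else 0)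
    (hgt_inv' : ∀ x ∈ U, ∀ μ ν, ∑ ρ, gtinv μ ρ x * gt ρ ν x = if μ = ν then 1 else 0)
    -- h̃^{ij} and Ã^{αi}
    (ht : Fin 3 → Fin 3 → (Fin n → ℝ) → ℝ)
    (hht : ∀ i j x, ht i j x = hinv i j x
        + ∑ k, ∑ l, ∑ μ, ∑ ν, hinv i k x * hinv l j x * gtinv μ ν x * A k ν x * A l μ x)
    (At : Fin n → Fin 3 → (Fin n → ℝ) → ℝ)
    (hAt : ∀ α i x, At α i x = -∑ ν, ∑ j, gtinv α ν x * hinv i j x * A j ν x)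
    -- Γ̃
    (Γt : Fin n → Fin n → Fin n → (Fin n → ℝ) → ℝ)
    (hΓt : ∀ σ μ ν x, Γt σ μ ν x = (1/2) * ∑ ρ, gtinv σ ρ x *
        (pd μ (gt ν ρ) x + pd ν (gt μ ρ) x - pd ρ (gt μ ν) x))
    -- the quantum Levi-Civita connection coefficients
    (E : Fin 3 → Fin n → Fin n → (Fin n → ℝ) → ℝ)
    (F : Fin n → Fin n → Fin 3 → (Fin n → ℝ) → ℝ)
    (B : Fin 3 → Fin n → Fin 3 → (Fin n → ℝ) → ℝ)
    (Dq : Fin n → Fin 3 → Fin 3 → (Fin n → ℝ) → ℝ)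
    (H : Fin 3 → Fin 3 → Fin 3 → (Fin n → ℝ) → ℝ)
    (Γ : Fin n → Fin n → Fin n → (Fin n → ℝ) → ℝ)
    (hE : ∀ k α β x, E k α β x = -(1/2) * ∑ i, hinv k i x *
        (pd α (A i β) x + pd β (A i α) x - 2 * ∑ μ, A i μ x * Γ μ α β x))
    (hF : ∀ μ' α i x, F μ' α i x = (1/2) * ∑ β, gtinv β μ' x *
        (-(pd α (A i β) x - pd β (A i α) x)
          + ∑ j, ∑ k, hinv j k x * A k β x * (pd α (h i j) x - ∑ l, A l α x * eps i j l)))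
    (hB : ∀ k α i x, B k α i x = (1/2) * ∑ j, ht j k x *
        ((∑ μ, ∑ β, ginv μ β x * A j μ x * (pd α (A i β) x - pd β (A i α) x))
          + (∑ l, A l α x * eps i j l) - pd α (h i j) x))
    (hDq : ∀ μ' i j x, Dq μ' i j x = (1/2) * ∑ α, gtinv μ' α x *
        (pd α (h i j) x - ∑ k, ∑ m, A k α x * hinv m k x *
            ((∑ n', h n' i x * eps j m n') + ∑ n', h n' j x * eps i m n')))
    (hH : ∀ l' i k x, H l' i k x = (1/2) * (∑ j, ht j l' x *
        ((∑ n', h n' i x * eps k j n') + (∑ n', h n' k x * eps i j n')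
          - ∑ μ, ∑ α, A j μ x * ginv μ α x * pd α (h i k) x)) - (1/2) * eps l' i k)
    (hΓ : ∀ σ μ ν x, Γ σ μ ν x = Γt σ μ ν x + (1/2) * ∑ ρ, gtinv σ ρ x *
        ((∑ i, A i μ x * (pd ν (fun y => ∑ j, hinv i j y * A j ρ y) x
              - pd ρ (fun y => ∑ j, hinv i j y * A j ν y) x))
          + (∑ i, A i ν x * (pd μ (fun y => ∑ j, hinv i j y * A j ρ y) x
              - pd ρ (fun y => ∑ j, hinv i j y * A j μ y) x))
          + ∑ i, ∑ j, A i μ x * A j ν x * pd ρ (hinv i j) x))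
    -- the internal vector space and operators P_i ∈ End(V)
    (V : Type*) [NormedAddCommGroup V] [NormedSpace ℂ V]
    (P : Fin 3 → V →L[ℂ] V)
    (f : (Fin n → ℝ) → V)
    (hf_smooth : ContDiffOn ℝ (⊤ : ℕ∞) f U)
    -- the gauge-covariant derivative ∂_α − h^{ik} A_{kα} P_i
    (CD : Fin n → ((Fin n → ℝ) → V) → ((Fin n → ℝ) → V))
    (hCD : ∀ α u x, CD α u x = pd α u x - ∑ i, ∑ k, (hinv i k x * A k α x) • P i (u x)) :
    ∀ x ∈ U,
      (∑ α, ∑ β, gtinv α β x • pd α (pd β f) x)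
      + (∑ i, ∑ j, ht i j x • P i (P j (f x)))
      + 2 • (∑ α, ∑ i, At α i x • pd α (fun y => P i (f y)) x)
      + (∑ i, ((∑ α, ∑ β, E i α β x * gtinv α β x)
            + 2 * (∑ α, ∑ j, B i α j x * At α j x)
            + ∑ j, ∑ k, H i j k x * ht j k x) • P i (f x))
      + (∑ μ, (-(∑ α, ∑ β, Γ μ α β x * gtinv α β x)
            + 2 * (∑ α, ∑ j, F μ α j x * At α j x)
            + ∑ j, ∑ k, Dq μ j k x * ht j k x) • pd μ f x)
      = (∑ α, ∑ β, gtinv α β x • (CD α (CD β f) x - ∑ μ, Γt μ α β x • CD μ f x))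
        + (∑ i, ∑ j, hinv i j x • P i (P j (f x)))
        + (1/2 : ℝ) • ∑ α, ∑ β,
            (gtinv α β x * ∑ i, ∑ j, hinv i j x * pd α (h i j) x) •
              (pd β f x - ∑ k, ∑ l, (hinv k l x * A l β x) • P k (f x)) := by

  intro x hx
  have hUx : ∀ᶠ y in nhds x, y ∈ U := hU.mem_nhds hx
  have dh : ∀ i j, DifferentiableAt ℝ (h i j) x := fun i j =>
    ((hh_smooth i j).contDiffAt (hU.mem_nhds hx)).differentiableAt (by simp)
  have dA : ∀ i μ, DifferentiableAt ℝ (A i μ) x := fun i j =>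
    ((hA_smooth i j).contDiffAt (hU.mem_nhds hx)).differentiableAt (by simp)
  have hfx : ContDiffAt ℝ (⊤ : ℕ∞) f x := hf_smooth.contDiffAt (hU.mem_nhds hx)
  have df : DifferentiableAt ℝ f x := hfx.differentiableAt (by simp)
  have dpdf : ∀ μ, DifferentiableAt ℝ (pd μ f) x := fun μ =>
    (((hfx.of_le (m := 2) (WithTop.coe_le_coe.2 (le_top : (2 : ℕ∞) ≤ ⊤))).fderiv_right (m := 1)
      (by norm_num)).differentiableAt (by simp)).clm_apply (differentiableAt_const _)
  have dhinv : ∀ i j, DifferentiableAt ℝ (hinv i j) x :=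
    differentiableAt_inverse_entry dh (hUx.mono hh_inv)
  have hpdinv := pd_inverse dh dhinv (hh_inv x hx) (hUx.mono hh_inv')
  have hhi_symm : ∀ i j, hinv i j x = hinv j i x :=
    inverse_symm (fun i j => hh_symm i j x) (hh_inv x hx)
  have hpdh_symm : ∀ α i j, pd α (h i j) x = pd α (h j i) x := fun α i j => by
    rw [funext (hh_symm i j)]
  have hgt_symm : ∀ μ ν, gt μ ν x = gt ν μ x := by
    intro μ ν
    rw [hgt, hgt, hg_symm, Finset.sum_comm]
    congr 1
    exact Finset.sum_congr rfl fun i _ => Finset.sum_congr rfl fun j _ => by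
      rw [hhi_symm]; ring
  have hG : ∀ μ ν, gtinv μ ν x = gtinv ν μ x :=
    inverse_symm hgt_symm (hgt_inv x hx)
  set q : Fin 3 → Fin n → (Fin n → ℝ) → ℝ := fun i μ y => ∑ j, hinv i j y * A j μ y with hq
  set m : Fin n → Fin 3 → ℝ := fun α i => ∑ β, gtinv α β x * q i β x with hm
  set N : Fin 3 → Fin 3 → ℝ := fun i j => ∑ α, m α i * q j α x with hN
  set a : Fin 3 → Fin n → Fin n → ℝ := fun i α β => pd α (A i β) x - pd β (A i α) x with ha
  set X : Fin n → Fin 3 → Fin 3 → ℝ :=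
    fun α i j => pd α (h i j) x - ∑ l, A l α x * eps i j l with hX
  set W : Fin 3 → ℝ := fun p => ∑ α, ∑ k, m α k * ∑ l, A l α x * eps k p l with hW
  set S : Fin n → ℝ := fun ρ => (∑ ν, ∑ j, m ν j * a j ν ρ)
      - (∑ ν, ∑ j, ∑ k, m ν j * pd ν (h j k) x * q k ρ x)
      + (1/2) * ∑ j, ∑ k, N j k * pd ρ (h j k) x with hS
  have dq : ∀ i μ, DifferentiableAt ℝ (q i μ) x := fun i μ => by
    simp only [hq]
    fun_prop
  have hAq : ∀ i μ, A i μ x = ∑ j, h i j x * q j μ x := by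
    intro i μ
    simp only [hq, Finset.mul_sum]
    rw [Finset.sum_comm]
    simp only [← mul_assoc, ← Finset.sum_mul, hh_inv x hx]
    simp
  have hpdq : ∀ α i β, pd α (q i β) x
      = ∑ j, hinv i j x * (pd α (A j β) x - ∑ k, pd α (h j k) x * q k β x) := by
    intro α i β
    simp only [hq]
    rw [pd_sum fun j => (dhinv i j).fun_mul (dA j β)]
    simp only [pd_mul (dhinv i _) (dA _ β), hpdinv, Fin.sum_univ_three]
    ring
  have hNs : ∀ i j, N i j = N j i := contract_symm hG (fun _ _ => rfl) fun _ _ => rfl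
  have hhtN : ∀ i j, ht i j x = hinv i j x + N i j := by
    intro i j
    rw [hht]
    congr 1
    simp only [hN, hm, hq, fun l => hhi_symm l j, Fin.sum_univ_three, Finset.sum_mul,
      ← Finset.sum_add_distrib]
    exact Finset.sum_congr rfl fun α _ => Finset.sum_congr rfl fun β _ => by ring
  have hht_symm : ∀ i j, ht i j x = ht j i x := fun i j => by
    rw [hhtN, hhtN, hhi_symm, hNs]
  have hAtm : ∀ α i, At α i x = -m α i := by
    intro α i
    rw [hAt]
    simp only [hm, hq, Finset.mul_sum, mul_assoc]
  have hmk : ∀ k β, ∑ j, ht j k x * ∑ μ, A j μ x * ginv μ β x = m β k := by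
    intro k β
    simp only [fun j => hht_symm j k]
    refine sum_ht_mul_A_mul_ginv (hi := fun i j => hinv i j x) (ht := fun i j => ht i j x)
      (A := fun i μ => A i μ x) (q := fun i μ => q i μ x) (ginv := fun μ ν => ginv μ ν x)
      (hg_inv x hx) (hgt_inv' x hx) ?_ hG (fun i j => hh_symm i j x) hAq (hh_inv' x hx)
      (fun _ _ => rfl) (fun _ _ => rfl) hhtN k β
    intro μ ν
    rw [hgt]
    simp only [hq, Fin.sum_univ_three]
    ring
  have hhth := sum_ht_mul_h (hh_inv' x hx) (fun i j => hh_symm i j x) hAq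
    (fun i j => show N i j = ∑ α, m α i * q j α x from rfl) hhtN
  have hWp : ∀ p, ∑ k, ∑ i, ht k i x * ∑ l, h l i x * eps k p l = W p :=
    sum_ht_mul_h_mul_eps hhth
  have hΓS : ∀ σ, ∑ α, ∑ β, Γ σ α β x * gtinv α β x
      = (∑ α, ∑ β, Γt σ α β x * gtinv α β x) + ∑ ρ, gtinv σ ρ x * S ρ := by
    intro σ
    have hqA : ∀ j μ, q j μ x = ∑ i, A i μ x * hinv i j x := fun j μ =>
      Finset.sum_congr rfl fun i _ => by rw [hhi_symm]; ring
    have t1 : ∀ μ α β, ∑ i, A i μ x * pd α (q i β) x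
        = ∑ j, q j μ x * (pd α (A j β) x - ∑ k, pd α (h j k) x * q k β x) := by
      intro μ α β
      simp only [hpdq, hqA _ μ, Finset.sum_mul]
      rw [Finset.sum_comm]
      refine Finset.sum_congr rfl fun i _ => ?_
      rw [Finset.mul_sum]
      exact Finset.sum_congr rfl fun j _ => by ring
    have t2 : ∀ μ ν ρ, ∑ i, ∑ j, A i μ x * A j ν x * pd ρ (hinv i j) x
        = -∑ i, ∑ j, q i μ x * q j ν x * pd ρ (h i j) x := by
      intro μ ν ρ
      simp only [hpdinv, hq, Fin.sum_univ_three, hhi_symm 1 0, hhi_symm 2 0, hhi_symm 2 1,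
        hpdh_symm ρ 1 0, hpdh_symm ρ 2 0, hpdh_symm ρ 2 1]
      ring
    set T : Fin n → Fin n → Fin n → ℝ := fun μ ν ρ =>
      (∑ i, A i μ x * (pd ν (q i ρ) x - pd ρ (q i ν) x))
        + (∑ i, A i ν x * (pd μ (q i ρ) x - pd ρ (q i μ) x))
        + ∑ i, ∑ j, A i μ x * A j ν x * pd ρ (hinv i j) x with hT
    have hTS : ∀ ρ, (1/2) * ∑ μ, ∑ ν, gtinv μ ν x * T μ ν ρ = S ρ := by
      refine contract_christoffel_difference hG (fun _ _ => rfl) (fun _ _ => rfl) ?_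
      intro μ ν ρ
      simp only [hT, mul_sub, Finset.sum_sub_distrib, t1, t2]
      simp only [ha, Fin.sum_univ_three]
      ring
    have hΓT : ∀ α β, Γ σ α β x * gtinv α β x = Γt σ α β x * gtinv α β x
        + ∑ ρ, gtinv σ ρ x * ((1/2) * (gtinv α β x * T α β ρ)) := by
      intro α β
      rw [hΓ, add_mul, Finset.mul_sum, Finset.sum_mul]
      exact congrArg _ (Finset.sum_congr rfl fun ρ _ => by ring)
    simp only [hΓT, Finset.sum_add_distrib, ← hTS]
    congr 1
    simp only [Finset.mul_sum]
    exact (Finset.sum_congr rfl fun α _ => Finset.sum_comm).trans Finset.sum_comm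
  have hFX : ∀ μ, 2 * ∑ α, ∑ i, F μ α i x * At α i x = ∑ β, gtinv μ β x *
      ((∑ α, ∑ i, m α i * a i α β) - ∑ α, ∑ i, ∑ j, m α i * q j β x * X α i j) := by
    refine sum_F_mul_At hG hAtm fun μ α i => ?_
    rw [hF]
    simp only [hq, Finset.sum_mul]
    rfl
  have hDW : ∀ μ, ∑ i, ∑ j, Dq μ i j x * ht i j x = ∑ α, gtinv μ α x *
      ((1/2) * (∑ i, ∑ j, ht i j x * pd α (h i j) x) - ∑ p, q p α x * W p) := by
    refine sum_D_mul_ht hht_symm (fun μ i j => ?_) hWp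
    rw [hDq]
    simp only [hq, Finset.sum_mul]
    refine congrArg _ (Finset.sum_congr rfl fun α _ => ?_)
    rw [Finset.sum_comm]
    simp only [mul_comm (A _ _ _)]
  have hEΓ := sum_E_mul_G (E := fun k α β => E k α β x) (Γ := fun σ α β => Γ σ α β x)
    (dA := fun α i β => pd α (A i β) x) (hi := fun i j => hinv i j x) (q := fun i μ => q i μ x)
    hG (fun _ _ => rfl) fun k α β => hE k α β x
  have hBX : ∀ k, 2 * ∑ α, ∑ i, B k α i x * At α i x
      = -(∑ α, ∑ i, m α i * ∑ β, m β k * a i α β)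
        + ∑ α, ∑ i, m α i * ∑ j, ht j k x * X α i j := by
    refine sum_B_mul_At hAtm hmk fun k α i => ?_
    rw [hB]
    refine congrArg _ (Finset.sum_congr rfl fun j _ => ?_)
    simp only [hX, ha]
    ring
  have hHW := sum_H_mul_ht (H := fun l i k => H l i k x) (dh := fun α i k => pd α (h i k) x)
    hht_symm hmk (fun l i k => hH l i k x) hWp
  have hcP := potential_coefficient hG hhi_symm (fun α i j => hpdh_symm α i j) hNs
    (fun _ _ => rfl) (fun _ _ => rfl) hhtN (fun _ _ _ => rfl) hpdq (fun _ => rfl) (fun _ => rfl)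
    hΓS hEΓ hBX hHW
  have hcd := derivative_coefficient hhtN (fun _ _ _ => rfl) (fun _ => rfl) (fun _ => rfl)
    hΓS hFX hDW
  have hpdP : ∀ α i, pd α (fun y => P i (f y)) x = P i (pd α f x) :=
    fun α i => pd_clm_apply (P i) df α
  have hCDq : ∀ α u y, CD α u y = pd α u y - ∑ i, q i α y • P i (u y) := by
    intro α u y
    simp only [hCD, hq, Finset.sum_smul]
  have hCD2 : ∀ α β, CD α (CD β f) x
      = (pd α (pd β f) x - (∑ i, (pd α (q i β) x • P i (f x) + q i β x • P i (pd α f x))))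
        - ∑ i, q i α x • (P i (pd β f x) - ∑ j, q j β x • P i (P j (f x))) := by
    intro α β
    have dP : ∀ i, DifferentiableAt ℝ (fun y => P i (f y)) x := fun i =>
      ((P i).restrictScalars ℝ).differentiableAt.comp x df
    rw [hCDq, funext (hCDq β f), pd_sub (dpdf β) (.fun_sum fun i _ => (dq i β).fun_smul (dP i)),
      pd_sum fun i => (dq i β).fun_smul (dP i)]
    simp only [pd_smul (dq _ β) (dP _), hpdP, map_sub, map_sum,
      ContinuousLinearMap.map_smul_of_tower]
  have key := covariant_laplacian_expansion (ddf := fun α β => pd α (pd β f) x)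
    (df := fun α => pd α f x) (Pf := fun i => P i (f x)) (Pdf := fun i α => P i (pd α f x))
    (PPf := fun i j => P i (P j (f x))) hG (fun α i => show m α i = _ from rfl)
    (fun i j => show N i j = _ from rfl) hhtN hAtm hcP hcd
  simp only [hpdP, hCD2]
  simp only [hCDq, ← Finset.sum_smul]
  exact key
end
end
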